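/- arXiv:1210.3488 — 3 statements merged into one kernel-verified Lean document; each statement's English description precedes it below -/
import Mathlib

section
/- Let n ≥ 2 and let R be a 2-torsionfree commutative domain. Then for every R-bilinear map q : T_n(R) × T_n(R) → T_n(R) on the algebra T_n(R) of n×n upper triangular matrices over R, every commuting trace T_q : T_n(R) → T_n(R) of q is proper. -/
open Matrix

set_option synthInstance.maxHeartbeats 1000000
set_option maxHeartbeats 1000000

/-- The algebra `T_n(R)` of `n × n` upper triangular matrices over `R`,
realized as a subalgebra of the full matrix algebra. -/
def upperTriangularAlgebra (n : ℕ) (R : Type*) [CommRing R] :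
    Subalgebra R (Matrix (Fin n) (Fin n) R) where
  carrier := {x | x.BlockTriangular (id : Fin n → Fin n)}
  add_mem' hx hy := hx.add hy
  mul_mem' hx hy := hx.mul hy
  algebraMap_mem' r := by
    intro i j hij
    rw [Matrix.algebraMap_matrix_apply]
    simp only [id] at hij
    rw [if_neg (by omega : ¬ i = j)]

/-!
In coordinates `q x x` is a quadratic form with matrix values. Because there is no `2`-torsion, the
identity `[q x x, x] = 0` can be polarized, so it persists for the generic upper triangular matrix
`G`, whose entries are independent variables.

The centralizer of `G` consists of the polynomials in `G`. Indeed, given `D` commuting with `G`, one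
subtracts multiples of the Newton products `∏ i < k, (G - G i i)` to clear its columns one at a
time: once the columns before `k` vanish, column `k` is an eigenvector for the eigenvalue `G k k`,
hence proportional to column `k` of the Newton product. That the quotient is a polynomial is a
divisibility by `∏ i < k, (G k k - G i i)`, checked one linear factor at a time on the hyperplane
where it vanishes.

So the generic trace is `∑ k, f k • G ^ k`. Its entries are quadratic and those of `G ^ k` have
degree `k`, so comparing components of degree `2` leaves a quadratic multiple of `1`, a linear
multiple of `G` and a constant multiple of `G ^ 2`; now specialize `G`.
-/

namespace CommutingTrace

open scoped Polynomial

section Divisibility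

theorem prod_dvd_of_dvd_mul {ι S : Type*} [CommMonoid S] {s : Finset ι} {p b : ι → S} {a : S}
    (hp : ∀ i ∈ s, IsLeftRegular (p i)) (hpb : ∀ i ∈ s, ∀ c, p i ∣ c * b i → p i ∣ c)
    (h : ∀ i ∈ s, ∏ j ∈ s, p j ∣ a * b i) : ∏ i ∈ s, p i ∣ a := by
  classical
  induction s using Finset.induction_on generalizing a with
  | empty => simp
  | insert i s hi ih =>
    simp only [Finset.forall_mem_insert, Finset.prod_insert hi] at hp hpb h ⊢
    obtain ⟨c, rfl⟩ := hpb.1 a (dvd_of_mul_right_dvd h.1)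
    refine mul_dvd_mul_left _ (ih hp.2 hpb.2 fun j hj ↦ ?_)
    obtain ⟨d, hd⟩ := h.2 j hj
    exact ⟨d, hp.1 (by simpa only [mul_assoc] using hd)⟩

open MvPolynomial

variable {σ R : Type*} [CommRing R]

theorem isRegular_of_isUnit_constantCoeff {f : MvPolynomial σ R}
    (hf : IsUnit (constantCoeff f)) : IsRegular f := by
  have hunit : IsUnit (f : MvPowerSeries σ R) := by
    rwa [MvPowerSeries.isUnit_iff_constantCoeff]
  refine (isLeftRegular_iff_isRegular).1 (isLeftRegular_of_non_zero_divisor f fun g hg ↦ ?_)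
  rw [← coe_eq_zero_iff, coe_mul] at hg
  exact coe_eq_zero_iff.1 (hunit.mul_right_eq_zero.1 hg)

theorem isRegular_of_isUnit_eval {f : MvPolynomial σ R} {x : σ → R}
    (hf : IsUnit (eval x f)) : IsRegular f := by
  let translate (y : σ → R) : MvPolynomial σ R →ₐ[R] MvPolynomial σ R :=
    aeval fun i ↦ X i + C (y i)
  have translate_neg (g : MvPolynomial σ R) : translate (-x) (translate x g) = g :=
    DFunLike.congr_fun (algHom_ext (f := (translate (-x)).comp (translate x))
      (g := AlgHom.id R _) fun i ↦ by simp [translate]) g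
  have constantCoeff_translate : constantCoeff (translate x f) = eval x f :=
    DFunLike.congr_fun (ringHom_ext (f := constantCoeff.comp (translate x).toRingHom)
      (g := eval x) (by simp [translate]) (by simp [translate])) f
  have translate_regular : IsRegular (translate x f) :=
    isRegular_of_isUnit_constantCoeff (constantCoeff_translate ▸ hf)
  refine isLeftRegular_iff_isRegular.1 (isLeftRegular_of_non_zero_divisor f fun g hg ↦ ?_)
  have translate_g : translate x g = 0 := by
    rw [← translate_regular.left.mul_left_eq_zero_iff, ← map_mul, hg, map_zero]
  rw [← translate_neg g, translate_g, map_zero]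

theorem X_sub_X_dvd_sub_aeval_update [DecidableEq σ] (a b : σ) (f : MvPolynomial σ R) :
    X a - X b ∣ f - aeval (Function.update X a (X b)) f := by
  let π := Ideal.Quotient.mkₐ R (Ideal.span {(X a - X b : MvPolynomial σ R)})
  have hπ : π.comp (aeval (Function.update X a (X b))) = π := by
    refine algHom_ext fun i ↦ ?_
    rcases eq_or_ne i a with rfl | hi
    · simp [π, Ideal.Quotient.eq, Ideal.mem_span_singleton, dvd_sub_comm (b := X b)]
    · simp [hi]
  rw [← Ideal.mem_span_singleton, ← Ideal.Quotient.eq]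
  exact (DFunLike.congr_fun hπ f).symm

theorem X_sub_X_dvd_of_dvd_mul {a b : σ} {f g : MvPolynomial σ R} {x : σ → R} (hx : x a = x b)
    (hg : IsUnit (eval x g)) (h : X a - X b ∣ f * g) : X a - X b ∣ f := by
  classical
  let φ : MvPolynomial σ R →ₐ[R] MvPolynomial σ R := aeval (Function.update X a (X b))
  have hφ : φ (X a - X b) = 0 := by simp [φ, Function.update_apply]
  have hφg : IsRegular (φ g) := by
    refine isRegular_of_isUnit_eval (x := x) ?_
    have : (aeval x).comp φ = aeval x := algHom_ext fun i ↦ by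
      rcases eq_or_ne i a with rfl | hi <;> simp [φ, *]
    rwa [← aeval_eq_eval, ← AlgHom.comp_apply, this]
  have hφf : φ f = 0 := by
    obtain ⟨c, hc⟩ := h
    rw [← hφg.right.mul_right_eq_zero_iff, ← map_mul, hc, map_mul, hφ, zero_mul]
  simpa only [φ, hφf, sub_zero] using X_sub_X_dvd_sub_aeval_update a b f

end Divisibility

section Homogeneous
open MvPolynomial
variable {σ R : Type*} [CommRing R] {f : MvPolynomial σ R}

theorem exists_linearMap_eval_eq (hf : f.IsHomogeneous 1) :
    ∃ l : (σ → R) →ₗ[R] R, ∀ x, eval x f = l x := by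
  rw [← mem_homogeneousSubmodule, homogeneousSubmodule_one_eq_span_X] at hf
  induction hf using Submodule.span_induction with
  | mem _ hX =>
    obtain ⟨i, rfl⟩ := hX
    exact ⟨LinearMap.proj i, by simp⟩
  | zero => exact ⟨0, by simp⟩
  | add _ _ _ _ hp hq =>
    obtain ⟨⟨l, hl⟩, l', hl'⟩ := hp, hq
    exact ⟨l + l', by simp [hl, hl']⟩
  | smul r _ _ hp =>
    obtain ⟨l, hl⟩ := hp
    exact ⟨r • l, by simp [hl]⟩

theorem exists_bilinearMap_eval_eq (hf : f.IsHomogeneous 2) :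
    ∃ B : (σ → R) →ₗ[R] (σ → R) →ₗ[R] R, ∀ x, eval x f = B x x := by
  rw [← mem_homogeneousSubmodule, ← homogeneousSubmodule_one_pow, pow_two] at hf
  induction hf using Submodule.mul_induction_on' with
  | mem_mul_mem p hp q hq =>
    obtain ⟨l, hl⟩ := exists_linearMap_eval_eq hp
    obtain ⟨l', hl'⟩ := exists_linearMap_eval_eq hq
    exact ⟨(LinearMap.mul R R).compl₁₂ l l', by simp [hl, hl']⟩
  | add _ _ _ _ hp hq =>
    obtain ⟨⟨B, hB⟩, B', hB'⟩ := hp, hq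
    exact ⟨B + B', by simp [hB, hB']⟩

theorem homogeneousComponent_mul_of_isHomogeneous {g : MvPolynomial σ R} {k : ℕ}
    (hg : g.IsHomogeneous k) (d : ℕ) :
    homogeneousComponent d (f * g) =
      if k ≤ d then homogeneousComponent (d - k) f * g else 0 := by
  let := gradedAlgebra (σ := σ) (R := R)
  have h := DirectSum.coe_decompose_mul_of_right_mem (homogeneousSubmodule σ R) d (a := f)
    ((mem_homogeneousSubmodule k g).2 hg)
  simp only [← decomposition.decompose'_apply]
  exact h

variable {m : Type*} [Fintype m] [DecidableEq m] {G D : Matrix m m (MvPolynomial σ R)}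

theorem isHomogeneous_pow_apply (hG : ∀ i j, (G i j).IsHomogeneous 1) (k : ℕ) (i j : m) :
    ((G ^ k) i j).IsHomogeneous k := by
  induction k generalizing j with
  | zero =>
    rcases eq_or_ne i j with rfl | hij
    · simpa using isHomogeneous_one σ R
    · simpa [hij] using isHomogeneous_zero σ R 0
  | succ k ih =>
    rw [pow_succ, mul_apply]
    exact IsHomogeneous.sum _ _ _ fun l _ ↦ (ih l).mul (hG l j)

theorem aeval_eq_sum_homogeneousComponent_smul_pow (hG : ∀ i j, (G i j).IsHomogeneous 1) {d : ℕ}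
    {f : (MvPolynomial σ R)[X]} (hf : ∀ i j, (Polynomial.aeval G f i j).IsHomogeneous d) :
    Polynomial.aeval G f =
      ∑ k ∈ Finset.range (d + 1), homogeneousComponent (d - k) (f.coeff k) • G ^ k := by
  ext1 i j
  rw [← homogeneousComponent_eq_self (hf i j),
    Polynomial.aeval_eq_sum_range' (n := f.natDegree + 1 + (d + 1)) (by lia)]
  simp only [Matrix.sum_apply, Matrix.smul_apply, smul_eq_mul, map_sum,
    homogeneousComponent_mul_of_isHomogeneous (isHomogeneous_pow_apply hG _ i j)]
  rw [← Finset.sum_filter]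
  congr 1
  ext k
  simp only [Finset.mem_filter, Finset.mem_range]
  lia

end Homogeneous

section Triangular

theorem eq_Iio_of_isLowerSet_insert {ι : Type*} [LinearOrder ι] [LocallyFiniteOrderBot ι]
    {s : Finset ι} {k : ι} (hk : ∀ i ∈ s, i < k) (hs : IsLowerSet (↑(insert k s) : Set ι)) :
    s = Finset.Iio k := by
  ext i
  refine ⟨fun hi ↦ Finset.mem_Iio.2 (hk i hi), fun hi ↦ ?_⟩
  have hik := Finset.mem_Iio.1 hi
  exact Finset.mem_of_mem_insert_of_ne (hs hik.le (Finset.mem_insert_self k s)) hik.ne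

open Polynomial

variable {ι S : Type*} [LinearOrder ι] [Fintype ι] [CommRing S] {M : Matrix ι ι S}

theorem eq_zero_of_mulVec_eq_smul (hM : M.BlockTriangular id) {k : ι}
    (hreg : ∀ i ≠ k, IsLeftRegular (M k k - M i i)) {v : ι → S}
    (hv : M *ᵥ v = M k k • v) (hvk : v k = 0) : v = 0 := by
  ext i
  induction i using WellFoundedGT.induction with | ind i ih
  rcases eq_or_ne i k with rfl | hik
  · exact hvk
  have hrow : (M *ᵥ v) i = M i i * v i :=
    Finset.sum_eq_single i (fun j _ hj ↦ hj.lt_or_gt.elim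
      (fun hji ↦ mul_eq_zero_of_left (hM hji) _)
      (fun hij ↦ mul_eq_zero_of_right _ (ih j hij))) (by simp)
  have hdiff : (M k k - M i i) * v i = 0 := by
    rw [sub_mul, ← hrow, hv, Pi.smul_apply, smul_eq_mul, sub_self]
  exact (hreg i hik).mul_left_eq_zero_iff.1 hdiff

theorem apply_smul_comm_of_mulVec_eq_smul (hM : M.BlockTriangular id) {k : ι}
    (hreg : ∀ i ≠ k, IsLeftRegular (M k k - M i i)) {v w : ι → S}
    (hv : M *ᵥ v = M k k • v) (hw : M *ᵥ w = M k k • w) : v k • w = w k • v := by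
  refine sub_eq_zero.1 (eq_zero_of_mulVec_eq_smul hM hreg ?_ ?_)
  · rw [mulVec_sub, mulVec_smul, mulVec_smul, hv, hw, smul_sub, smul_comm (v k), smul_comm (w k)]
  · simp [mul_comm]

theorem mul_apply_diag {N : Matrix ι ι S} (hM : M.BlockTriangular id)
    (hN : N.BlockTriangular id) (k : ι) : (M * N) k k = M k k * N k k :=
  Finset.sum_eq_single k (fun j _ hj ↦ hj.lt_or_gt.elim
    (fun hjk ↦ mul_eq_zero_of_left (hM hjk) _) (fun hkj ↦ mul_eq_zero_of_right _ (hN hkj)))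
    (by simp)

theorem mulVec_col_eq_smul_of_commute {D : Matrix ι ι S} (hM : M.BlockTriangular id)
    (hD : Commute D M) {k : ι} (hcol : ∀ j < k, D.col j = 0) :
    M *ᵥ D.col k = M k k • D.col k := by
  ext i
  calc (M * D) i k = (D * M) i k := by rw [hD.eq]
    _ = D i k * M k k := Finset.sum_eq_single k (fun j _ hj ↦ hj.lt_or_gt.elim
      (fun hjk ↦ mul_eq_zero_of_left (congrFun (hcol j hjk) i) _)
      (fun hkj ↦ mul_eq_zero_of_right _ (hM hkj))) (by simp)
    _ = M k k * D i k := mul_comm _ _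

theorem aeval_apply_diag (hM : M.BlockTriangular id) (f : S[X]) (k : ι) :
    aeval M f k k = f.eval (M k k) := by
  have hpow (r : ℕ) : (M ^ r) k k = M k k ^ r := by
    induction r with
    | zero => simp
    | succ r ih => rw [pow_succ, mul_apply_diag (hM.pow r) hM, ih, pow_succ]
  simp [aeval_eq_sum_range, eval_eq_sum_range, Matrix.sum_apply, hpow]

/-- The Newton interpolation polynomial `∏ i ∈ s, (T - M i i)` with nodes the diagonal entries of
`M` indexed by `s`; for `s = univ` and `M` triangular this is the characteristic polynomial. -/
noncomputable def newtonPoly (M : Matrix ι ι S) (s : Finset ι) : S[X] :=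
  ∏ i ∈ s, (X - C (M i i))

theorem map_aeval_newtonPoly {S' : Type*} [CommRing S'] (φ : S →+* S') (s : Finset ι) :
    (aeval M (newtonPoly M s)).map φ = aeval (M.map φ) (newtonPoly (M.map φ) s) := by
  have h := map_aeval_eq_aeval_map (S := Matrix ι ι S) (U := Matrix ι ι S') (φ := φ)
    (ψ := φ.mapMatrix) (by ext; simp [algebraMap_matrix_apply, apply_ite φ]) (newtonPoly M s) M
  simpa [newtonPoly, Polynomial.map_prod] using h

theorem aeval_newtonPoly_insert {s : Finset ι} {k : ι} (hk : k ∉ s) :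
    aeval M (newtonPoly M (insert k s)) =
      aeval M (newtonPoly M s) * (M - algebraMap S _ (M k k)) := by
  rw [newtonPoly, Finset.prod_insert hk, mul_comm, map_mul, map_sub, aeval_X, aeval_C, newtonPoly]

theorem exists_aeval_newtonPoly_apply_eq_one {i a : ι} (hia : i < a) {s : Finset ι}
    (hi : i ∈ s) (ha : a ∉ s) :
    ∃ M : Matrix ι ι S, M.BlockTriangular id ∧ M i i = M a a ∧
      aeval M (newtonPoly M s) i a = 1 := by
  -- `M` fixes `e_i`, and `M - 1` maps `e_a` to `e_i`.
  let M : Matrix ι ι S := single i i 1 + single a a 1 + single i a 1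
  have hM : M.BlockTriangular id :=
    ((blockTriangular_single le_rfl _).add (blockTriangular_single le_rfl _)).add
      (blockTriangular_single hia.le _)
  have hMi : M i i = 1 := by simp [M, hia.ne']
  have hMa : M a a = 1 := by simp [M, hia.ne]
  have hMj : ∀ j ∈ s.erase i, M j j = 0 := fun j hj ↦ by
    have hja : a ≠ j := by rintro rfl; exact ha (Finset.mem_of_mem_erase hj)
    simp [M, (Finset.ne_of_mem_erase hj).symm, hja]
  refine ⟨M, hM, hMi.trans hMa.symm, ?_⟩
  have hcol (l : ι) : (M - algebraMap S _ (M i i)) l a = if l = i then 1 else 0 := by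
    rcases eq_or_ne l i with rfl | hli
    · simp [M, hia.ne, hia.ne']
    rcases eq_or_ne l a with rfl | hla
    · simp [hMi, hMa, hli]
    · simp [M, algebraMap_matrix_apply, hli, hli.symm, hla, hla.symm]
  rw [← Finset.insert_erase hi, aeval_newtonPoly_insert (Finset.notMem_erase i s), mul_apply]
  simp only [hcol, mul_ite, mul_one, mul_zero, Finset.sum_ite_eq', Finset.mem_univ, if_true]
  rw [aeval_apply_diag hM, newtonPoly, eval_prod]
  exact Finset.prod_eq_one fun j hj ↦ by simp [hMi, hMj j hj]

variable [LocallyFiniteOrderBot ι]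

theorem aeval_newtonPoly_apply_eq_zero (hM : M.BlockTriangular id) {s : Finset ι}
    (hs : IsLowerSet (s : Set ι)) (i : ι) {j : ι} (hj : j ∈ s) :
    aeval M (newtonPoly M s) i j = 0 := by
  induction s using Finset.induction_on_max generalizing j with
  | empty => simp at hj
  | insert k s hk ih =>
    obtain rfl := eq_Iio_of_isLowerSet_insert hk hs
    rw [aeval_newtonPoly_insert Finset.notMem_Iio_self, mul_apply]
    refine Finset.sum_eq_zero fun l _ ↦ ?_
    rcases lt_or_ge l k with hlk | hkl
    · rw [ih (by simpa using isLowerSet_Iio k) (Finset.mem_Iio.2 hlk), zero_mul]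
    have hjk : j ≤ k := by simpa [le_iff_eq_or_lt] using hj
    rcases (hjk.trans hkl).eq_or_lt with rfl | hjl
    · obtain rfl := le_antisymm hjk hkl
      simp [algebraMap_matrix_apply]
    · simp [algebraMap_matrix_apply, hM hjl, hjl.ne']

theorem mulVec_col_aeval_newtonPoly_Iio (hM : M.BlockTriangular id) (k : ι) :
    M *ᵥ (aeval M (newtonPoly M (Finset.Iio k))).col k =
      M k k • (aeval M (newtonPoly M (Finset.Iio k))).col k := by
  set N := aeval M (newtonPoly M (Finset.Iio k)) with hN
  have hcomm : Commute M N := by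
    simpa [hN] using (Commute.all X (newtonPoly M (Finset.Iio k))).map (aeval M)
  have hlower : IsLowerSet (↑(insert k (Finset.Iio k)) : Set ι) := by
    simpa [Set.Iio_insert] using isLowerSet_Iic k
  ext i
  have hzero := aeval_newtonPoly_apply_eq_zero hM hlower i (Finset.mem_insert_self k _)
  rw [aeval_newtonPoly_insert Finset.notMem_Iio_self, mul_sub, ← hN, ← hcomm.eq,
    ← Algebra.commutes, ← Algebra.smul_def] at hzero
  exact sub_eq_zero.1 hzero

theorem aeval_newtonPoly_Iio_apply_self (hM : M.BlockTriangular id) (k : ι) :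
    aeval M (newtonPoly M (Finset.Iio k)) k k = ∏ i ∈ Finset.Iio k, (M k k - M i i) := by
  simp [aeval_apply_diag hM, newtonPoly, eval_prod]

theorem exists_col_sub_smul_aeval_newtonPoly_eq_zero {D : Matrix ι ι S}
    (hM : M.BlockTriangular id) {k : ι} (hreg : ∀ i ≠ k, IsLeftRegular (M k k - M i i))
    (hdvd : ∀ v, M *ᵥ v = M k k • v → ∏ i ∈ Finset.Iio k, (M k k - M i i) ∣ v k)
    (hD : Commute D M) (hcol : ∀ j < k, D.col j = 0) :
    ∃ c : S, ∀ j ≤ k, (D - c • aeval M (newtonPoly M (Finset.Iio k))).col j = 0 := by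
  set N := aeval M (newtonPoly M (Finset.Iio k)) with hN
  have heigen := mulVec_col_eq_smul_of_commute hM hD hcol
  obtain ⟨c, hc⟩ := hdvd _ heigen
  refine ⟨c, fun j hj ↦ ?_⟩
  change D.col j - c • N.col j = 0
  rcases hj.eq_or_lt with rfl | hjk
  · refine eq_zero_of_mulVec_eq_smul hM hreg ?_ ?_
    · rw [mulVec_sub, mulVec_smul, heigen, mulVec_col_aeval_newtonPoly_Iio hM, smul_sub,
        smul_comm c]
    · rw [Pi.sub_apply, hc, ← aeval_newtonPoly_Iio_apply_self hM, mul_comm]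
      exact sub_self _
  · have hNj : N.col j = 0 := funext fun i ↦
      aeval_newtonPoly_apply_eq_zero hM (by simpa using isLowerSet_Iio k) i (Finset.mem_Iio.2 hjk)
    rw [hcol j hjk, hNj, smul_zero, sub_zero]

theorem exists_aeval_eq_of_commute {D : Matrix ι ι S} (hM : M.BlockTriangular id)
    (hreg : ∀ k, ∀ i ≠ k, IsLeftRegular (M k k - M i i))
    (hdvd : ∀ k v, M *ᵥ v = M k k • v → ∏ i ∈ Finset.Iio k, (M k k - M i i) ∣ v k)
    (hD : Commute D M) : ∃ f : S[X], aeval M f = D := by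
  suffices key : ∀ s : Finset ι, IsLowerSet (s : Set ι) →
      ∃ f : S[X], ∀ j ∈ s, (D - aeval M f).col j = 0 by
    obtain ⟨f, hf⟩ := key Finset.univ (by simpa using isLowerSet_univ)
    refine ⟨f, (sub_eq_zero.1 ?_).symm⟩
    ext i j
    exact congrFun (hf j (Finset.mem_univ j)) i
  intro s hs
  induction s using Finset.induction_on_max with
  | empty => exact ⟨0, by simp⟩
  | insert k s hk ih =>
    obtain rfl := eq_Iio_of_isLowerSet_insert hk hs
    obtain ⟨f, hf⟩ := ih (by simpa using isLowerSet_Iio k)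
    have hDf : Commute (D - aeval M f) M :=
      hD.sub_left (by simpa using (Commute.all f X).map (aeval M))
    obtain ⟨c, hc⟩ := exists_col_sub_smul_aeval_newtonPoly_eq_zero hM (hreg k) (hdvd k) hDf
      fun j hj ↦ hf j (Finset.mem_Iio.2 hj)
    refine ⟨f + c • newtonPoly M (Finset.Iio k), fun j hj ↦ ?_⟩
    rw [map_add, map_smul, ← sub_sub]
    exact hc j (by simpa [le_iff_eq_or_lt] using hj)

end Triangular

section Generic

open MvPolynomial

variable {ι R : Type*} [LinearOrder ι] [CommRing R]

/-- The generic upper triangular matrix: its entries on and above the diagonal are independent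
variables. -/
noncomputable def genericTriangular (ι R : Type*) [LinearOrder ι] [CommRing R] :
    Matrix ι ι (MvPolynomial {p : ι × ι // p.1 ≤ p.2} R) :=
  of fun i j ↦ if h : i ≤ j then X ⟨(i, j), h⟩ else 0

theorem blockTriangular_genericTriangular : (genericTriangular ι R).BlockTriangular id :=
  fun _ _ hij ↦ dif_neg hij.not_ge

theorem genericTriangular_apply_self (i : ι) :
    genericTriangular ι R i i = X ⟨(i, i), le_rfl⟩ :=
  dif_pos le_rfl

theorem map_eval_genericTriangular {M : Matrix ι ι R} (hM : M.BlockTriangular id) :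
    (genericTriangular ι R).map (eval fun p ↦ M p.1.1 p.1.2) = M := by
  ext i j
  rcases le_or_gt i j with hij | hji
  · simp [genericTriangular, hij]
  · simp [genericTriangular, hji.not_ge, hM hji]

theorem isRegular_genericTriangular_apply_self_sub {i k : ι} (hik : i ≠ k) :
    IsRegular (genericTriangular ι R k k - genericTriangular ι R i i) := by
  refine isRegular_of_isUnit_eval (x := fun p ↦ if p.1.1 = k then 1 else 0) ?_
  simp [genericTriangular_apply_self, hik]

variable [Fintype ι] [LocallyFiniteOrderBot ι]

theorem prod_genericTriangular_apply_self_sub_dvd {k : ι}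
    {v : ι → MvPolynomial {p : ι × ι // p.1 ≤ p.2} R}
    (hv : genericTriangular ι R *ᵥ v = genericTriangular ι R k k • v) :
    ∏ i ∈ Finset.Iio k, (genericTriangular ι R k k - genericTriangular ι R i i) ∣ v k := by
  set G := genericTriangular ι R
  let N := Polynomial.aeval G (newtonPoly G (Finset.Iio k))
  have hG : G.BlockTriangular id := blockTriangular_genericTriangular
  have hreg (i : ι) (hi : i ≠ k) : IsRegular (G k k - G i i) :=
    isRegular_genericTriangular_apply_self_sub hi
  refine prod_dvd_of_dvd_mul (b := fun i ↦ N i k)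
    (fun i hi ↦ (hreg i (Finset.mem_Iio.1 hi).ne).left) (fun i hi c hc ↦ ?_) fun i _ ↦ ?_
  · obtain ⟨M, hM, hdiag, hone⟩ := exists_aeval_newtonPoly_apply_eq_one (S := R)
      (Finset.mem_Iio.1 hi) hi Finset.notMem_Iio_self
    have heval : eval (fun p ↦ M p.1.1 p.1.2) (N i k) = 1 := by
      have h := map_aeval_newtonPoly (M := G) (eval fun p ↦ M p.1.1 p.1.2) (Finset.Iio k)
      rw [map_eval_genericTriangular hM] at h
      exact (congrFun₂ h i k).trans hone
    simp only [G, genericTriangular_apply_self] at hc ⊢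
    exact X_sub_X_dvd_of_dvd_mul hdiag.symm (heval ▸ isUnit_one) hc
  · have h := apply_smul_comm_of_mulVec_eq_smul hG (fun i hi ↦ (hreg i hi).left) hv
      (mulVec_col_aeval_newtonPoly_Iio hG k)
    refine ⟨v i, ?_⟩
    rw [← aeval_newtonPoly_Iio_apply_self hG]
    exact congrFun h i

theorem exists_aeval_genericTriangular_eq_of_commute
    {D : Matrix ι ι (MvPolynomial {p : ι × ι // p.1 ≤ p.2} R)}
    (hD : Commute D (genericTriangular ι R)) :
    ∃ f : (MvPolynomial {p : ι × ι // p.1 ≤ p.2} R)[X],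
      Polynomial.aeval (genericTriangular ι R) f = D :=
  exists_aeval_eq_of_commute blockTriangular_genericTriangular
    (fun _ _ hi ↦ (isRegular_genericTriangular_apply_self_sub hi).left)
    (fun _ _ ↦ prod_genericTriangular_apply_self_sub_dvd) hD

end Generic

section Polarization

variable {κ R S V W N : Type*} [CommRing R] [AddCommGroup V] [Module R V]
  [AddCommGroup W] [Module R W] [CommRing S] [AddCommGroup N] [Module S N]

theorem trilinear_polarization (htf : ∀ w : W, w + w = 0 → w = 0)
    {t : V →ₗ[R] V →ₗ[R] V →ₗ[R] W} (ht : ∀ x, t x x x = 0) (a b : V) :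
    t a a b + t a b a + t b a a = 0 := by
  apply htf
  have hadd := ht (a + b)
  have hsub := ht (a - b)
  simp only [map_add, map_sub, LinearMap.add_apply, LinearMap.sub_apply] at hadd hsub
  linear_combination (norm := module) hadd - hsub - 2 • ht b

theorem trilinear_full_polarization (htf : ∀ w : W, w + w = 0 → w = 0)
    {t : V →ₗ[R] V →ₗ[R] V →ₗ[R] W} (ht : ∀ x, t x x x = 0) (a b c : V) :
    (t a b c + t b a c + t b c a) + (t a c b + t c a b + t c b a) = 0 := by
  have hbc := trilinear_polarization htf ht (b + c) a
  simp only [map_add, LinearMap.add_apply] at hbc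
  linear_combination (norm := module)
    hbc - trilinear_polarization htf ht b a - trilinear_polarization htf ht c a

theorem sum_sum_smul_eq_zero {g : κ → κ → N} (hdiag : ∀ a, g a a = 0)
    (hswap : ∀ a b, g a b + g b a = 0) (s : κ → S) (A : Finset κ) :
    ∑ a ∈ A, ∑ b ∈ A, (s a * s b) • g a b = 0 := by
  classical
  induction A using Finset.induction_on with
  | empty => simp
  | insert i A hi ih =>
    simp only [Finset.sum_insert hi, Finset.sum_add_distrib, ih, hdiag, smul_zero, zero_add,
      add_zero]
    rw [← Finset.sum_add_distrib]
    exact Finset.sum_eq_zero fun b _ ↦ by rw [mul_comm (s b), ← smul_add, hswap, smul_zero]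

theorem sum_sum_sum_smul_eq_zero {t : κ → κ → κ → N} (hdiag : ∀ a, t a a a = 0)
    (hpolar : ∀ a b, t a a b + t a b a + t b a a = 0)
    (hfull : ∀ a b c, (t a b c + t b a c + t b c a) + (t a c b + t c a b + t c b a) = 0)
    (s : κ → S) (A : Finset κ) :
    ∑ a ∈ A, ∑ b ∈ A, ∑ c ∈ A, (s a * s b * s c) • t a b c = 0 := by
  classical
  induction A using Finset.induction_on with
  | empty => simp
  | insert i A hi ih =>
    have hlinear : ∑ b ∈ A, s b • (t i i b + t i b i + t b i i) = 0 :=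
      Finset.sum_eq_zero fun b _ ↦ by rw [hpolar, smul_zero]
    have hquadratic :
        ∑ b ∈ A, ∑ c ∈ A, (s b * s c) • (t i b c + t b i c + t b c i) = 0 :=
      sum_sum_smul_eq_zero (fun a ↦ by rw [← hpolar a i]; abel) (hfull i) s A
    calc ∑ a ∈ insert i A, ∑ b ∈ insert i A, ∑ c ∈ insert i A, (s a * s b * s c) • t a b c
        = (s i * s i * s i) • t i i i
          + (s i * s i) • ∑ b ∈ A, s b • (t i i b + t i b i + t b i i)
          + s i • ∑ b ∈ A, ∑ c ∈ A, (s b * s c) • (t i b c + t b i c + t b c i)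
          + ∑ a ∈ A, ∑ b ∈ A, ∑ c ∈ A, (s a * s b * s c) • t a b c := by
          simp only [Finset.sum_insert hi, Finset.sum_add_distrib, Finset.smul_sum, smul_add,
            smul_smul, mul_assoc, mul_comm _ (s i), mul_left_comm _ (s i)]
          abel
      _ = 0 := by simp only [hdiag, hlinear, hquadratic, ih, smul_zero, add_zero]

theorem commute_sum_smul_of_commuting_trace {A B : Type*} [Ring A] [Algebra R A] [Ring B]
    [Algebra S B] [Fintype κ] (htf : ∀ x : A, x + x = 0 → x = 0) {q : A →ₗ[R] A →ₗ[R] A}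
    (hcomm : ∀ x, Commute (q x x) x) (ρ : A →+* B) (e : κ → A) (s : κ → S) :
    Commute (∑ a, ∑ b, (s a * s b) • ρ (q (e a) (e b))) (∑ c, s c • ρ (e c)) := by
  let t : A →ₗ[R] A →ₗ[R] A →ₗ[R] A := q.compr₂ (LinearMap.mul R A - (LinearMap.mul R A).flip)
  have ht (x : A) : t x x x = 0 := sub_eq_zero.2 (hcomm x)
  have hsum := sum_sum_sum_smul_eq_zero (t := fun a b c ↦ ρ (t (e a) (e b) (e c)))
    (fun a ↦ by rw [ht, map_zero])
    (fun a b ↦ by simp only [← map_add, trilinear_polarization htf ht, map_zero])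
    (fun a b c ↦ by simp only [← map_add, trilinear_full_polarization htf ht, map_zero])
    s Finset.univ
  refine sub_eq_zero.1 (.trans ?_ hsum)
  simp only [t, LinearMap.compr₂_apply, LinearMap.sub_apply, LinearMap.mul_apply',
    LinearMap.flip_apply, map_sub, map_mul, smul_sub, Finset.sum_sub_distrib, Finset.sum_mul,
    Finset.mul_sum, smul_mul_smul_comm]
  refine congrArg₂ _ ?_ ?_
  · rw [Finset.sum_comm]
    exact Finset.sum_congr rfl fun a _ ↦ Finset.sum_comm
  · simp only [mul_comm (s _) (s _ * s _)]

end Polarization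

section GenericElement

open MvPolynomial

variable {κ m R : Type*} [Fintype κ] [Fintype m] [DecidableEq m] [CommRing R]
  {A : Subalgebra R (Matrix m m R)}

/-- The generic element `∑ a, X a • b a` of a matrix algebra with basis `b`. -/
noncomputable def genericElement (b : Module.Basis κ R A) : Matrix m m (MvPolynomial κ R) :=
  ∑ a, (X a : MvPolynomial κ R) • (b a : Matrix m m R).map C

/-- The value at the generic element of the trace `x ↦ q x x` of a bilinear map. -/
noncomputable def genericTrace (b : Module.Basis κ R A) (q : A →ₗ[R] A →ₗ[R] A) :
    Matrix m m (MvPolynomial κ R) :=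
  ∑ a, ∑ a', (X a * X a' : MvPolynomial κ R) • (q (b a) (b a') : Matrix m m R).map C

variable (b : Module.Basis κ R A) (q : A →ₗ[R] A →ₗ[R] A)

theorem isHomogeneous_genericElement_apply (i j : m) :
    (genericElement b i j).IsHomogeneous 1 := by
  rw [genericElement, Matrix.sum_apply]
  exact IsHomogeneous.sum _ _ _ fun a _ ↦ (isHomogeneous_X R a).mul (isHomogeneous_C κ _)

theorem isHomogeneous_genericTrace_apply (i j : m) :
    (genericTrace b q i j).IsHomogeneous 2 := by
  simp only [genericTrace, Matrix.sum_apply]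
  exact IsHomogeneous.sum _ _ _ fun a _ ↦ IsHomogeneous.sum _ _ _ fun a' _ ↦
    ((isHomogeneous_X R a).mul (isHomogeneous_X R a')).mul (isHomogeneous_C κ _)

theorem map_eval_genericElement (x : A) :
    (genericElement b).map (eval (b.equivFun x)) = x := by
  obtain ⟨y, rfl⟩ := b.equivFun.symm.surjective x
  rw [LinearEquiv.apply_symm_apply, b.equivFun_symm_apply]
  ext i j
  simp [genericElement, Matrix.sum_apply]

theorem map_eval_genericTrace (x : A) :
    (genericTrace b q).map (eval (b.equivFun x)) = q x x := by
  obtain ⟨y, rfl⟩ := b.equivFun.symm.surjective x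
  rw [LinearEquiv.apply_symm_apply, b.equivFun_symm_apply]
  simp only [map_sum, map_smul, LinearMap.sum_apply, LinearMap.smul_apply, Finset.smul_sum,
    smul_smul]
  rw [Finset.sum_comm]
  ext i j
  simp [genericTrace, Matrix.sum_apply, mul_comm (y _) (y _)]

variable {q}

theorem commute_genericTrace_genericElement (htf : ∀ r : R, r + r = 0 → r = 0)
    (hcomm : ∀ x, Commute (q x x) x) : Commute (genericTrace b q) (genericElement b) := by
  have htfA (x : A) (hx : x + x = 0) : x = 0 := by
    ext i j
    exact htf _ (congrFun₂ (congrArg Subtype.val hx) i j)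
  exact commute_sum_smul_of_commuting_trace htfA hcomm
    ((C (R := R) (σ := κ)).mapMatrix.comp A.val.toRingHom) b (X (R := R))

theorem exists_trace_eq_of_centralizer_genericElement (htf : ∀ r : R, r + r = 0 → r = 0)
    (hcomm : ∀ x, Commute (q x x) x)
    (hcent : ∀ D, Commute D (genericElement b) →
      ∃ f : (MvPolynomial κ R)[X], Polynomial.aeval (genericElement b) f = D) :
    ∃ (r : R) (μ : A →ₗ[R] R) (ν : A →ₗ[R] A →ₗ[R] R),
      ∀ x, q x x = r • x ^ 2 + μ x • x + algebraMap R A (ν x x) := by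
  obtain ⟨f, hf⟩ := hcent _ (commute_genericTrace_genericElement b htf hcomm)
  obtain ⟨μ, hμ⟩ := exists_linearMap_eval_eq (homogeneousComponent_isHomogeneous 1 (f.coeff 1))
  obtain ⟨ν, hν⟩ := exists_bilinearMap_eval_eq (homogeneousComponent_isHomogeneous 2 (f.coeff 0))
  have htrace := aeval_eq_sum_homogeneousComponent_smul_pow
    (isHomogeneous_genericElement_apply b) (hf ▸ isHomogeneous_genericTrace_apply b q)
  rw [hf] at htrace
  refine ⟨coeff 0 (f.coeff 2), μ ∘ₗ b.equivFun, ν.compl₁₂ b.equivFun b.equivFun, fun x ↦ ?_⟩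
  have hmap (c : MvPolynomial κ R) (k : ℕ) :
      (c • genericElement b ^ k).map (eval (b.equivFun x)) =
        eval (b.equivFun x) c • (x : Matrix m m R) ^ k := by
    rw [Matrix.map_smul' _ _ _ (map_mul _), ← map_eval_genericElement b x]
    exact congrArg _ (map_pow (eval (b.equivFun x)).mapMatrix (genericElement b) k)
  apply Subtype.ext
  rw [← map_eval_genericTrace b q x, htrace]
  simp only [Finset.sum_range_succ, Finset.sum_range_zero, zero_add, tsub_zero, tsub_self,
    Nat.reduceSub, Matrix.map_add _ (map_add _), hmap, hμ, hν, homogeneousComponent_zero, eval_C]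
  simp only [LinearMap.coe_comp, LinearEquiv.coe_coe, Function.comp_apply,
    LinearMap.compl₁₂_apply, Algebra.algebraMap_eq_smul_one, AddMemClass.coe_add,
    SetLike.val_smul, SubmonoidClass.coe_pow, OneMemClass.coe_one, pow_zero, pow_one]
  abel

end GenericElement

section UpperTriangular

open MvPolynomial

variable (n : ℕ) (R : Type*) [CommRing R]

/-- The basis of matrix units of the upper triangular matrices, given by its coordinates: the
entries on and above the diagonal. -/
noncomputable def upperTriangularBasis :
    Module.Basis {p : Fin n × Fin n // p.1 ≤ p.2} R (upperTriangularAlgebra n R) :=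
  .ofEquivFun
    { toFun := fun x p ↦ x.1 p.1.1 p.1.2
      map_add' := fun _ _ ↦ rfl
      map_smul' := fun _ _ ↦ rfl
      invFun := fun y ↦ ⟨of fun i j ↦ if h : i ≤ j then y ⟨(i, j), h⟩ else 0,
        fun _ _ hij ↦ dif_neg hij.not_ge⟩
      left_inv := fun x ↦ by
        ext i j
        rcases le_or_gt i j with hij | hji
        · simp [hij]
        · simp [hji.not_ge, x.2 hji]
      right_inv := fun y ↦ by
        ext p
        simp [p.2] }

theorem genericElement_upperTriangularBasis :
    genericElement (upperTriangularBasis n R) = genericTriangular (Fin n) R := by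
  ext1 i j
  rcases le_or_gt i j with hij | hji
  · simp [genericElement, genericTriangular, upperTriangularBasis, Matrix.sum_apply, hij,
      Pi.single_apply]
  · simp [genericElement, genericTriangular, upperTriangularBasis, Matrix.sum_apply, hji.not_ge]

end UpperTriangular

end CommutingTrace

open CommutingTrace in
theorem stmt7_general (n : ℕ) (R : Type*) [CommRing R]
    (htf : ∀ r : R, r + r = 0 → r = 0)
    (q : upperTriangularAlgebra n R →ₗ[R] upperTriangularAlgebra n R →ₗ[R]
          upperTriangularAlgebra n R)
    (hcomm : ∀ x : upperTriangularAlgebra n R, q x x * x = x * q x x) :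
    ∃ z ∈ Subring.center (upperTriangularAlgebra n R),
      ∃ μ : upperTriangularAlgebra n R →ₗ[R] upperTriangularAlgebra n R,
        (∀ x, μ x ∈ Subring.center (upperTriangularAlgebra n R)) ∧
        ∃ p : upperTriangularAlgebra n R →ₗ[R] upperTriangularAlgebra n R →ₗ[R]
              upperTriangularAlgebra n R,
          (∀ x y, p x y ∈ Subring.center (upperTriangularAlgebra n R)) ∧
          ∀ x : upperTriangularAlgebra n R, q x x = z * x ^ 2 + μ x * x + p x x := by
  have hcenter (r : R) : algebraMap R (upperTriangularAlgebra n R) r ∈ Subring.center _ :=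
    Subring.mem_center_iff.2 fun x ↦ (Algebra.commutes r x).symm
  obtain ⟨r, μ, ν, h⟩ := exists_trace_eq_of_centralizer_genericElement
    (upperTriangularBasis n R) htf hcomm fun D hD ↦ by
      rw [genericElement_upperTriangularBasis] at hD ⊢
      exact exists_aeval_genericTriangular_eq_of_commute hD
  refine ⟨algebraMap R _ r, hcenter r, Algebra.linearMap R _ ∘ₗ μ, fun x ↦ hcenter (μ x),
    ν.compr₂ (Algebra.linearMap R _), fun x y ↦ hcenter (ν x y), fun x ↦ ?_⟩
  rw [h x, Algebra.smul_def, Algebra.smul_def]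
  rfl

/-- **Corollary 3.15 (Benkovič–Eremita).**  Let `n ≥ 2` and let `R` be a
`2`-torsionfree commutative domain.  Then for every `R`-bilinear map
`q : T_n(R) × T_n(R) → T_n(R)` on the algebra of `n × n` upper triangular matrices
over `R`, every commuting trace `T_q` of `q` is proper. -/
theorem stmt7 (n : ℕ) (hn : 2 ≤ n) (R : Type*) [CommRing R] [IsDomain R]
    (htf : ∀ r : R, r + r = 0 → r = 0)
    (q : upperTriangularAlgebra n R →ₗ[R] upperTriangularAlgebra n R →ₗ[R]
          upperTriangularAlgebra n R)
    (hcomm : ∀ x : upperTriangularAlgebra n R, q x x * x = x * q x x) :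
    ∃ z ∈ Subring.center (upperTriangularAlgebra n R),
      ∃ μ : upperTriangularAlgebra n R →ₗ[R] upperTriangularAlgebra n R,
        (∀ x, μ x ∈ Subring.center (upperTriangularAlgebra n R)) ∧
        ∃ p : upperTriangularAlgebra n R →ₗ[R] upperTriangularAlgebra n R →ₗ[R]
              upperTriangularAlgebra n R,
          (∀ x y, p x y ∈ Subring.center (upperTriangularAlgebra n R)) ∧
          ∀ x : upperTriangularAlgebra n R, q x x = z * x ^ 2 + μ x * x + p x x :=
  stmt7_general n R htf q hcomm
end

section
/- Let G = [R M; N B] be a 2-torsionfree generalized matrix algebra over a commutative ring R whose (1,1)-corner is R itself, where B is a noncommutative R-algebra and both G and B are central over R (Z(G) = R·1 and Z(B) = R·1_B). Suppose that (1) every commuting R-linear map on B is proper; (2) for r ∈ R and m ∈ M, rm = 0 implies r = 0 or m = 0; and (3) there exist m₀ ∈ M and b₀ ∈ B such that m₀b₀ and m₀ are R-linearly independent. Then for every R-bilinear map q : G × G → G, every commuting trace T_q : G → G of q is proper. -/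
/-- A realization of the `R`-algebra `G` as a generalized matrix algebra
`[A M; N B]` arising from a Morita context `(A, B, M, N, Φ, Ψ)`:
`G` decomposes `R`-linearly as `A ⊕ M ⊕ N ⊕ B` (via the injections `ιA, ιM, ιN, ιB`
and the projections `pA, pM, pN, pB`), and multiplication in `G` follows the
matrix-like multiplication rules.  The bimodule actions of `A` and `B` on `M` and `N`
and the pairings `Φ : M ⊗ N → A`, `Ψ : N ⊗ M → B` are recovered from the
multiplication of `G`; the requirement that the corresponding products land in the
appropriate corner is expressed by the `mul_*` fields.  The standing assumption that
`M` is faithful as a left `A`-module and as a right `B`-module is included. -/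
structure GMA (R A B M N G : Type*) [CommRing R]
    [Ring A] [Algebra R A] [Ring B] [Algebra R B]
    [AddCommGroup M] [Module R M] [AddCommGroup N] [Module R N]
    [Ring G] [Algebra R G] where
  ιA : A →ₗ[R] G
  ιB : B →ₗ[R] G
  ιM : M →ₗ[R] G
  ιN : N →ₗ[R] G
  pA : G →ₗ[R] A
  pB : G →ₗ[R] B
  pM : G →ₗ[R] M
  pN : G →ₗ[R] N
  decomp : ∀ g : G, g = ιA (pA g) + ιM (pM g) + ιN (pN g) + ιB (pB g)
  pA_ιA : ∀ a, pA (ιA a) = a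
  pA_ιM : ∀ m, pA (ιM m) = 0
  pA_ιN : ∀ n, pA (ιN n) = 0
  pA_ιB : ∀ b, pA (ιB b) = 0
  pM_ιA : ∀ a, pM (ιA a) = 0
  pM_ιM : ∀ m, pM (ιM m) = m
  pM_ιN : ∀ n, pM (ιN n) = 0
  pM_ιB : ∀ b, pM (ιB b) = 0
  pN_ιA : ∀ a, pN (ιA a) = 0
  pN_ιM : ∀ m, pN (ιM m) = 0
  pN_ιN : ∀ n, pN (ιN n) = n
  pN_ιB : ∀ b, pN (ιB b) = 0
  pB_ιA : ∀ a, pB (ιA a) = 0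
  pB_ιM : ∀ m, pB (ιM m) = 0
  pB_ιN : ∀ n, pB (ιN n) = 0
  pB_ιB : ∀ b, pB (ιB b) = b
  one_def : (1 : G) = ιA 1 + ιB 1
  mul_AA : ∀ a a', ιA a * ιA a' = ιA (a * a')
  mul_BB : ∀ b b', ιB b * ιB b' = ιB (b * b')
  mul_AM : ∀ a m, ιA a * ιM m ∈ LinearMap.range ιM
  mul_MB : ∀ m b, ιM m * ιB b ∈ LinearMap.range ιM
  mul_BN : ∀ b n, ιB b * ιN n ∈ LinearMap.range ιN
  mul_NA : ∀ n a, ιN n * ιA a ∈ LinearMap.range ιN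
  mul_MN : ∀ m n, ιM m * ιN n ∈ LinearMap.range ιA
  mul_NM : ∀ n m, ιN n * ιM m ∈ LinearMap.range ιB
  mul_AB : ∀ a b, ιA a * ιB b = 0
  mul_BA : ∀ b a, ιB b * ιA a = 0
  mul_AN : ∀ a n, ιA a * ιN n = 0
  mul_NB : ∀ n b, ιN n * ιB b = 0
  mul_MA : ∀ m a, ιM m * ιA a = 0
  mul_BM : ∀ b m, ιB b * ιM m = 0
  mul_MM : ∀ m m', ιM m * ιM m' = 0
  mul_NN : ∀ n n', ιN n * ιN n' = 0
  faithful_left : ∀ a : A, (∀ m : M, ιA a * ιM m = 0) → a = 0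
  faithful_right : ∀ b : B, (∀ m : M, ιM m * ιB b = 0) → b = 0

/-!
Write `e` for the idempotent `ιB 1` and `≡` for equality modulo the scalars `R · 1`. Linearizing
`[q(x, x), x] = 0` twice yields the cyclic identity `[S(x, y), z] + [S(y, z), x] + [S(z, x), y] = 0`
for `S(x, y) = q(x, y) + q(y, x)`. Since `A = R`, an element commuting with `e` is a scalar plus
`ιB d` for a unique `d ∈ B`, its *defect*, so commutators of such elements are governed by `B` and
by the action of `B` on `M` alone.

First, `q(e, e) ≡ ε e` for some `ε ∈ R`, and `x ↦ S(x, e) - ε x` takes values commuting with `e`;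
its defect restricted to `B` is a commuting map of `B`. Properness of the latter provides `z` and
`μ` such that `q'(x, y) = q(x, y) - z x y - μ(x) y` satisfies `q'(x, e) + q'(e, x) ≡ 0` for all `x`.

By the cyclic identity every value of the symmetrization of `q'` now commutes with `e`. Its defect
`D : G × G → B` inherits a cyclic identity in `M` and one in `B`. Faithfulness of `M` over `B`
kills `D(x, y)` as soon as `x` and `y` have no `M`-component, and the independent pair
`m₀ b₀`, `m₀` kills the rest. Hence `q'(x, x) ≡ 0`.
-/

theorem eq_zero_of_add_self_eq_zero_of_injective {V W : Type*} [AddCommGroup V] [AddCommGroup W]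
    {F : Type*} [FunLike F V W] [AddMonoidHomClass F V W] {f : F} (hf : Function.Injective f)
    (hW : ∀ w : W, w + w = 0 → w = 0) {v : V} (hv : v + v = 0) : v = 0 := by
  refine (map_eq_zero_iff f hf).1 (hW _ ?_)
  rw [← map_add, hv, map_zero]

section Symmetrization

variable {R V W : Type*} [CommRing R] [AddCommGroup V] [Module R V] [AddCommGroup W] [Module R W]

/-- The symmetrization `(x, y) ↦ q x y + q y x` of a bilinear map, i.e. the polarization of its
trace `x ↦ q x x`. -/
def symmetrization (q : V →ₗ[R] V →ₗ[R] W) : V →ₗ[R] V →ₗ[R] W :=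
  q + q.flip

@[simp]
theorem symmetrization_apply (q : V →ₗ[R] V →ₗ[R] W) (x y : V) :
    symmetrization q x y = q x y + q y x :=
  rfl

theorem symmetrization_comm (q : V →ₗ[R] V →ₗ[R] W) (x y : V) :
    symmetrization q x y = symmetrization q y x :=
  add_comm _ _

end Symmetrization

section CommutingTrace

variable {R L : Type*} [CommRing R] [LieRing L] [LieAlgebra R L] {q : L →ₗ[R] L →ₗ[R] L}

theorem lie_trace_add_lie_symmetrization (hL : ∀ x : L, x + x = 0 → x = 0)
    (hq : ∀ x, ⁅q x x, x⁆ = 0) (x y : L) : ⁅q x x, y⁆ + ⁅symmetrization q x y, x⁆ = 0 := by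
  have hadd := hq (x + y)
  have hsub := hq (x - y)
  have hy := hq y
  apply hL
  simp only [symmetrization_apply, map_add, map_sub, LinearMap.add_apply, LinearMap.sub_apply,
    lie_add, add_lie, lie_sub, sub_lie] at hadd hsub ⊢
  linear_combination (norm := abel) hadd - hsub - hy - hy

theorem lie_symmetrization_cyclic (hL : ∀ x : L, x + x = 0 → x = 0)
    (hq : ∀ x, ⁅q x x, x⁆ = 0) (x y z : L) :
    ⁅symmetrization q x y, z⁆ + ⁅symmetrization q y z, x⁆ + ⁅symmetrization q z x, y⁆ = 0 := by
  have hxy := lie_trace_add_lie_symmetrization hL hq (x + y) z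
  have hx := lie_trace_add_lie_symmetrization hL hq x z
  have hy := lie_trace_add_lie_symmetrization hL hq y z
  simp only [symmetrization_apply, map_add, LinearMap.add_apply, lie_add, add_lie] at hxy hx hy ⊢
  linear_combination (norm := abel) hxy - hx - hy

theorem lie_symmetrization_sub_smul_self (hL : ∀ x : L, x + x = 0 → x = 0)
    (hq : ∀ x, ⁅q x x, x⁆ = 0) {e : L} {ε : R} (hε : ∀ x : L, ⁅q e e - ε • e, x⁆ = 0) (x : L) :
    ⁅symmetrization q x e - ε • x, e⁆ = 0 := by
  have hex := lie_trace_add_lie_symmetrization hL hq e x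
  have hεx := hε x
  rw [sub_lie, smul_lie, sub_eq_zero] at hεx
  rw [sub_lie, smul_lie, symmetrization_comm, ← lie_skew x, smul_neg, ← hεx, sub_neg_eq_add,
    add_comm, hex]

theorem lie_symmetrization_sub_smul_add_swap (hL : ∀ x : L, x + x = 0 → x = 0)
    (hq : ∀ x, ⁅q x x, x⁆ = 0) (e : L) (ε : R) (x y : L) :
    ⁅symmetrization q x e - ε • x, y⁆ + ⁅symmetrization q y e - ε • y, x⁆ =
      -⁅symmetrization q x y, e⁆ := by
  have hcyclic := lie_symmetrization_cyclic hL hq x y e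
  rw [symmetrization_comm q e x] at hcyclic
  rw [sub_lie, sub_lie, smul_lie, smul_lie, ← lie_skew y x]
  linear_combination (norm := module) hcyclic

end CommutingTrace

section AssociativeCommutator

attribute [local instance] LieRing.ofAssociativeRing

section Scalars

variable {R C : Type*} [CommRing R] [Ring C] [Algebra R C]

theorem lie_eq_zero_of_mem_bot {c : C} (hc : c ∈ (⊥ : Subalgebra R C)) (x : C) : ⁅c, x⁆ = 0 := by
  obtain ⟨r, rfl⟩ := Algebra.mem_bot.1 hc
  rw [Ring.lie_def, Algebra.commutes, sub_self]

theorem mem_bot_of_forall_lie_eq_zero [Algebra.IsCentral R C] {c : C} (hc : ∀ x : C, ⁅c, x⁆ = 0) :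
    c ∈ (⊥ : Subalgebra R C) :=
  Algebra.IsCentral.out (Subalgebra.mem_center_iff.2 fun x => (sub_eq_zero.1 (hc x)).symm)

theorem exists_linearMap_algebraMap_eq (hinj : Function.Injective (algebraMap R C)) {V : Type*}
    [AddCommGroup V] [Module R V] (f : V →ₗ[R] C) (hf : ∀ v, f v ∈ (⊥ : Subalgebra R C)) :
    ∃ g : V →ₗ[R] R, ∀ v, algebraMap R C (g v) = f v :=
  ⟨f.codRestrictOfInjective (Algebra.linearMap R C) hinj hf,
    f.codRestrictOfInjective_comp_apply (Algebra.linearMap R C) hinj hf⟩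

variable (R C) in
/-- Every commuting `R`-linear map of `C` is multiplication by a scalar modulo scalars. When `C` is
central over `R` this says that every commuting linear map is proper; the linear map into the centre
need not be recorded, being the difference `f - z • id`. -/
def CommutingMapsProper : Prop :=
  ∀ f : C →ₗ[R] C, (∀ c, ⁅f c, c⁆ = 0) → ∃ z : R, ∀ c, f c - z • c ∈ (⊥ : Subalgebra R C)

theorem commutingMapsProper_of_center [Algebra.IsCentral R C]
    (hC : ∀ f : C →ₗ[R] C, (∀ c, f c * c = c * f c) →
      ∃ z ∈ Subring.center C, ∃ η : C →ₗ[R] C,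
        (∀ c, η c ∈ Subring.center C) ∧ ∀ c, f c = z * c + η c) :
    CommutingMapsProper R C := by
  intro f hf
  obtain ⟨z, hz, η, hη, hfη⟩ := hC f fun c => sub_eq_zero.1 (hf c)
  have mem_bot_of_mem_center {c : C} (hc : c ∈ Subring.center C) : c ∈ (⊥ : Subalgebra R C) :=
    Algebra.IsCentral.out (Subalgebra.mem_center_iff.2 (Subring.mem_center_iff.1 hc))
  obtain ⟨r, rfl⟩ := Algebra.mem_bot.1 (mem_bot_of_mem_center hz)
  refine ⟨r, fun c => ?_⟩
  rw [hfη, Algebra.smul_def, add_sub_cancel_left]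
  exact mem_bot_of_mem_center (hη c)

/-- The bilinear map `(x, y) ↦ q x y - z x y - μ(x) y`, whose trace is that of `q` with the
standard commuting traces `z x²` and `μ(x) x` removed. -/
def subStandardTrace (q : C →ₗ[R] C →ₗ[R] C) (z : R) (μ : C →ₗ[R] R) : C →ₗ[R] C →ₗ[R] C :=
  q - z • LinearMap.mul R C - LinearMap.lsmul R C ∘ₗ μ

@[simp]
theorem subStandardTrace_apply (q : C →ₗ[R] C →ₗ[R] C) (z : R) (μ : C →ₗ[R] R) (x y : C) :
    subStandardTrace q z μ x y = q x y - z • (x * y) - μ x • y :=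
  rfl

theorem lie_subStandardTrace_self {q : C →ₗ[R] C →ₗ[R] C} (hq : ∀ x, ⁅q x x, x⁆ = 0) (z : R)
    (μ : C →ₗ[R] R) (x : C) : ⁅subStandardTrace q z μ x x, x⁆ = 0 := by
  have hsq : ⁅x * x, x⁆ = 0 := by rw [Ring.lie_def, mul_assoc, sub_self]
  simp only [subStandardTrace_apply, sub_lie, smul_lie, hq, hsq, lie_self, smul_zero, sub_zero]

end Scalars

namespace GMA

attribute [simp] pA_ιA pA_ιM pA_ιN pA_ιB pM_ιA pM_ιM pM_ιN pM_ιB pN_ιA pN_ιM pN_ιN pN_ιB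
  pB_ιA pB_ιM pB_ιN pB_ιB mul_BB mul_AB mul_BA mul_NB mul_BM

section Corners

variable {R A B M N G : Type*} [CommRing R] [Ring A] [Algebra R A] [Ring B] [Algebra R B]
  [AddCommGroup M] [Module R M] [AddCommGroup N] [Module R N] [Ring G] [Algebra R G]
  (h : GMA R A B M N G)

theorem ιB_injective : Function.Injective h.ιB :=
  Function.LeftInverse.injective h.pB_ιB

theorem ιM_injective : Function.Injective h.ιM :=
  Function.LeftInverse.injective h.pM_ιM

theorem ιB_one_mul_ιN (n : N) : h.ιB 1 * h.ιN n = h.ιN n := by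
  conv_rhs => rw [← one_mul (h.ιN n), h.one_def, add_mul, h.mul_AN, zero_add]

theorem ιM_mul_ιB_one (m : M) : h.ιM m * h.ιB 1 = h.ιM m := by
  conv_rhs => rw [← mul_one (h.ιM m), h.one_def, mul_add, h.mul_MA, zero_add]

/-- The right action of `B` on `M`, recovered from the multiplication of `G`. -/
def rightAction : M →ₗ[R] B →ₗ[R] M :=
  ((LinearMap.mul R G).compl₁₂ h.ιM h.ιB).compr₂ h.pM

theorem rightAction_apply (m : M) (b : B) : h.rightAction m b = h.pM (h.ιM m * h.ιB b) :=
  rfl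

theorem ιM_rightAction (m : M) (b : B) : h.ιM (h.rightAction m b) = h.ιM m * h.ιB b := by
  obtain ⟨m', hm'⟩ := h.mul_MB m b
  rw [rightAction_apply, ← hm', pM_ιM]

@[simp]
theorem rightAction_algebraMap (m : M) (r : R) : h.rightAction m (algebraMap R B r) = r • m := by
  rw [Algebra.algebraMap_eq_smul_one, map_smul, rightAction_apply, ιM_mul_ιB_one, pM_ιM]

theorem eq_zero_of_forall_rightAction_eq_zero {b : B} (hb : ∀ m, h.rightAction m b = 0) : b = 0 :=
  h.faithful_right b fun m => by rw [← ιM_rightAction, hb, map_zero]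

theorem pM_lie_ιB (b : B) (x : G) : h.pM ⁅h.ιB b, x⁆ = -h.rightAction (h.pM x) b := by
  obtain ⟨n, hn⟩ := h.mul_BN b (h.pN x)
  rw [Ring.lie_def]
  conv_lhs => rw [h.decomp x]
  simp [mul_add, add_mul, ← hn, rightAction_apply]

theorem pN_lie_ιB_one (x : G) : h.pN ⁅h.ιB 1, x⁆ = h.pN x := by
  rw [Ring.lie_def]
  conv_lhs => rw [h.decomp x]
  simp [mul_add, add_mul, ιB_one_mul_ιN, ιM_mul_ιB_one]

theorem pB_lie_ιB (b : B) (x : G) : h.pB ⁅h.ιB b, x⁆ = ⁅b, h.pB x⁆ := by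
  obtain ⟨n, hn⟩ := h.mul_BN b (h.pN x)
  obtain ⟨m, hm⟩ := h.mul_MB (h.pM x) b
  rw [Ring.lie_def]
  conv_lhs => rw [h.decomp x]
  simp [mul_add, add_mul, ← hn, ← hm, Ring.lie_def]

theorem pB_lie_ιB_one (g : G) : h.pB ⁅g, h.ιB 1⁆ = 0 := by
  rw [← lie_skew, map_neg, pB_lie_ιB, Ring.lie_def, one_mul, mul_one, sub_self, neg_zero]

theorem mul_ιB_one_add_ιB_one_mul (x : G) :
    x * h.ιB 1 + h.ιB 1 * x = x + h.ιB (h.pB x) - h.ιA (h.pA x) := by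
  conv_lhs => rw [h.decomp x]
  conv_rhs => enter [1, 1]; rw [h.decomp x]
  simp only [mul_add, add_mul, mul_AB, mul_BA, mul_NB, mul_BM, mul_BB, mul_one, one_mul,
    ιM_mul_ιB_one, ιB_one_mul_ιN]
  abel

end Corners

variable {R B M N G : Type*} [CommRing R] [Ring B] [Algebra R B] [AddCommGroup M] [Module R M]
  [AddCommGroup N] [Module R N] [Ring G] [Algebra R G] (h : GMA R R B M N G)

theorem algebraMap_eq_ιA_add_ιB (r : R) :
    algebraMap R G r = h.ιA r + h.ιB (algebraMap R B r) := by
  rw [Algebra.algebraMap_eq_smul_one, h.one_def, smul_add, ← map_smul, ← map_smul, smul_eq_mul,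
    mul_one, Algebra.algebraMap_eq_smul_one]

/-- The difference `g_B - g_A · 1` of the diagonal corners of `g`; for a diagonal matrix it
measures the distance from being a scalar. -/
def defect : G →ₗ[R] B :=
  h.pB - Algebra.linearMap R B ∘ₗ h.pA

theorem defect_apply (g : G) : h.defect g = h.pB g - algebraMap R B (h.pA g) :=
  rfl

theorem defect_ιB (b : B) : h.defect (h.ιB b) = b := by
  rw [defect_apply, pB_ιB, pA_ιB, map_zero, sub_zero]

theorem eq_algebraMap_add_ιB_defect {g : G} (hg : ⁅g, h.ιB 1⁆ = 0) :
    g = algebraMap R G (h.pA g) + h.ιB (h.defect g) := by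
  have hg' : ⁅h.ιB 1, g⁆ = 0 := by rw [← lie_skew, hg, neg_zero]
  have hM : h.pM g = 0 := by
    have := h.pM_lie_ιB 1 g
    rwa [hg', map_zero, zero_eq_neg, rightAction_apply, ιM_mul_ιB_one, pM_ιM] at this
  have hN : h.pN g = 0 := by rw [← pN_lie_ιB_one, hg', map_zero]
  conv_lhs => rw [h.decomp g, hM, hN]
  rw [h.algebraMap_eq_ιA_add_ιB, defect_apply, map_sub, map_zero, map_zero]
  abel

theorem lie_eq_lie_ιB_defect {g : G} (hg : ⁅g, h.ιB 1⁆ = 0) (x : G) :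
    ⁅g, x⁆ = ⁅h.ιB (h.defect g), x⁆ := by
  conv_lhs => rw [h.eq_algebraMap_add_ιB_defect hg, add_lie,
    lie_eq_zero_of_mem_bot (R := R) (Algebra.mem_bot.2 ⟨_, rfl⟩), zero_add]

theorem pM_lie {g : G} (hg : ⁅g, h.ιB 1⁆ = 0) (x : G) :
    h.pM ⁅g, x⁆ = -h.rightAction (h.pM x) (h.defect g) := by
  rw [h.lie_eq_lie_ιB_defect hg, pM_lie_ιB]

theorem pB_lie {g : G} (hg : ⁅g, h.ιB 1⁆ = 0) (x : G) :
    h.pB ⁅g, x⁆ = ⁅h.defect g, h.pB x⁆ := by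
  rw [h.lie_eq_lie_ιB_defect hg, pB_lie_ιB]

theorem mem_bot_of_defect_eq_zero {g : G} (hg : ⁅g, h.ιB 1⁆ = 0) (hd : h.defect g = 0) :
    g ∈ (⊥ : Subalgebra R G) :=
  Algebra.mem_bot.2 ⟨h.pA g, by
    conv_rhs => rw [h.eq_algebraMap_add_ιB_defect hg, hd, map_zero, add_zero]⟩

theorem algebraMap_pA_of_mem_bot {g : G} (hg : g ∈ (⊥ : Subalgebra R G)) :
    algebraMap R G (h.pA g) = g := by
  obtain ⟨r, rfl⟩ := Algebra.mem_bot.1 hg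
  simp [h.algebraMap_eq_ιA_add_ιB r]

theorem defect_eq_zero_of_mem_bot {g : G} (hg : g ∈ (⊥ : Subalgebra R G)) : h.defect g = 0 := by
  obtain ⟨r, rfl⟩ := Algebra.mem_bot.1 hg
  simp [h.algebraMap_eq_ιA_add_ιB r, defect_apply]

theorem exists_trace_ιB_one_sub_smul_mem_bot [Algebra.IsCentral R B]
    (hG : ∀ g : G, g + g = 0 → g = 0) {q : G →ₗ[R] G →ₗ[R] G}
    (hq : ∀ x, ⁅q x x, x⁆ = 0) :
    ∃ ε : R, q (h.ιB 1) (h.ιB 1) - ε • h.ιB 1 ∈ (⊥ : Subalgebra R G) := by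
  have central (b : B) : ⁅h.defect (q (h.ιB 1) (h.ιB 1)), b⁆ = 0 := by
    have := congrArg h.pB (lie_trace_add_lie_symmetrization hG hq (h.ιB 1) (h.ιB b))
    rwa [map_add, h.pB_lie (hq _), h.pB_lie_ιB_one, add_zero, pB_ιB, map_zero] at this
  obtain ⟨ε, hε⟩ := Algebra.mem_bot.1 (mem_bot_of_forall_lie_eq_zero (R := R) central)
  refine ⟨ε, Algebra.mem_bot.2 ⟨h.pA (q (h.ιB 1) (h.ιB 1)), ?_⟩⟩
  conv_rhs => rw [h.eq_algebraMap_add_ιB_defect (hq _), ← hε,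
    Algebra.algebraMap_eq_smul_one (A := B), map_smul, add_sub_cancel_right]

theorem exists_defect_sub_smul_mem_bot [Algebra.IsCentral R B]
    (hG : ∀ g : G, g + g = 0 → g = 0) (hB : CommutingMapsProper R B) {F : G →ₗ[R] G}
    (hFe : ∀ x, ⁅F x, h.ιB 1⁆ = 0) (hF : ∀ x y, h.pB (⁅F x, y⁆ + ⁅F y, x⁆) = 0) :
    ∃ z : R, ∀ x, h.defect (F x) - z • h.pB x ∈ (⊥ : Subalgebra R B) := by
  have lie_defect (x y : G) : ⁅h.defect (F x), h.pB y⁆ + ⁅h.defect (F y), h.pB x⁆ = 0 := by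
    rw [← h.pB_lie (hFe x), ← h.pB_lie (hFe y), ← map_add, hF]
  obtain ⟨z, hz⟩ := hB (h.defect ∘ₗ F ∘ₗ h.ιB) fun b =>
    eq_zero_of_add_self_eq_zero_of_injective h.ιB_injective hG <| by
      simpa only [pB_ιB, LinearMap.comp_apply] using lie_defect (h.ιB b) (h.ιB b)
  refine ⟨z, fun x => mem_bot_of_forall_lie_eq_zero fun b => ?_⟩
  have hbx := lie_eq_zero_of_mem_bot (hz b) (h.pB x)
  rw [LinearMap.comp_apply, LinearMap.comp_apply, sub_lie, smul_lie, sub_eq_zero] at hbx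
  rw [sub_lie, smul_lie, ← lie_skew (h.pB x), smul_neg, sub_neg_eq_add, ← hbx]
  simpa only [pB_ιB] using lie_defect x (h.ιB b)

theorem symmetrization_subStandardTrace_ιB_one_mem_bot {q : G →ₗ[R] G →ₗ[R] G} {z : R}
    {ν : G →ₗ[R] R} {x g : G} (hge : ⁅g, h.ιB 1⁆ = 0)
    (hg : symmetrization q x (h.ιB 1) = g + (z + ν (h.ιB 1)) • x)
    (hdefect : h.defect g = z • h.pB x + algebraMap R B (ν x)) :
    symmetrization (subStandardTrace q z (ν - z • h.pA)) x (h.ιB 1) ∈ (⊥ : Subalgebra R G) := by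
  refine Algebra.mem_bot.2 ⟨h.pA g + z * h.pA x, ?_⟩
  have hsub : symmetrization (subStandardTrace q z (ν - z • h.pA)) x (h.ιB 1) =
      symmetrization q x (h.ιB 1) - z • (x * h.ιB 1 + h.ιB 1 * x)
        - (ν x - z * h.pA x) • h.ιB 1 - ν (h.ιB 1) • x := by
    simp only [symmetrization_apply, subStandardTrace_apply, LinearMap.sub_apply,
      LinearMap.smul_apply, pA_ιB, smul_eq_mul, mul_zero, sub_zero]
    module
  have hιA : h.ιA (h.pA x) = h.pA x • 1 - h.pA x • h.ιB 1 := by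
    rw [← Algebra.algebraMap_eq_smul_one, h.algebraMap_eq_ιA_add_ιB,
      Algebra.algebraMap_eq_smul_one, map_smul, add_sub_cancel_right]
  have hg' := h.eq_algebraMap_add_ιB_defect hge
  rw [hdefect, map_add, map_smul, Algebra.algebraMap_eq_smul_one, Algebra.algebraMap_eq_smul_one,
    map_smul] at hg'
  rw [hsub, hg, h.mul_ιB_one_add_ιB_one_mul, hιA, Algebra.algebraMap_eq_smul_one]
  linear_combination (norm := module) -hg'

theorem exists_symmetrization_subStandardTrace_mem_bot [Algebra.IsCentral R B]
    (hG : ∀ g : G, g + g = 0 → g = 0) (hB : CommutingMapsProper R B)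
    (hinj : Function.Injective (algebraMap R B)) {q : G →ₗ[R] G →ₗ[R] G}
    (hq : ∀ x, ⁅q x x, x⁆ = 0) :
    ∃ (z : R) (μ : G →ₗ[R] R), ∀ x,
      symmetrization (subStandardTrace q z μ) x (h.ιB 1) ∈ (⊥ : Subalgebra R G) := by
  obtain ⟨ε, hε⟩ := h.exists_trace_ιB_one_sub_smul_mem_bot hG hq
  let F : G →ₗ[R] G := (symmetrization q).flip (h.ιB 1) - ε • LinearMap.id
  have F_apply (x : G) : F x = symmetrization q x (h.ιB 1) - ε • x := rfl
  have hFe (x : G) : ⁅F x, h.ιB 1⁆ = 0 :=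
    lie_symmetrization_sub_smul_self hG hq (lie_eq_zero_of_mem_bot hε) x
  have hF (x y : G) : h.pB (⁅F x, y⁆ + ⁅F y, x⁆) = 0 := by
    rw [F_apply, F_apply, lie_symmetrization_sub_smul_add_swap hG hq, map_neg, pB_lie_ιB_one,
      neg_zero]
  obtain ⟨z, hz⟩ := h.exists_defect_sub_smul_mem_bot hG hB hFe hF
  obtain ⟨ν, hν⟩ := exists_linearMap_algebraMap_eq hinj (h.defect ∘ₗ F - z • h.pB) hz
  have defect_F (x : G) : h.defect (F x) = z • h.pB x + algebraMap R B (ν x) := by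
    rw [hν]
    simp only [LinearMap.sub_apply, LinearMap.comp_apply, LinearMap.smul_apply, add_sub_cancel]
  have hνe : z + ν (h.ιB 1) = ε := by
    apply hinj
    have hdefect := h.defect_eq_zero_of_mem_bot hε
    have hFe := defect_F (h.ιB 1)
    simp only [F_apply, symmetrization_apply, map_sub, map_add, map_smul, defect_ιB, pB_ιB,
      Algebra.algebraMap_eq_smul_one] at hdefect hFe ⊢
    linear_combination (norm := module) 2 • hdefect - hFe
  refine ⟨z, ν - z • h.pA, fun x =>
    h.symmetrization_subStandardTrace_ιB_one_mem_bot (hFe x) ?_ (defect_F x)⟩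
  rw [F_apply, hνe, sub_add_cancel]

/-- The identities satisfied by the defect of a symmetric bilinear map `S` of `G` with values
commuting with `ιB 1` and with `[S(x, y), z] + [S(y, z), x] + [S(z, x), y] = 0`: the `M`- and
`B`-components of the latter. -/
structure IsCyclicDefect (D : G →ₗ[R] G →ₗ[R] B) : Prop where
  symm : ∀ x y, D x y = D y x
  rightAction_cyclic : ∀ x y z, h.rightAction (h.pM z) (D x y) + h.rightAction (h.pM x) (D y z)
    + h.rightAction (h.pM y) (D z x) = 0
  lie_cyclic : ∀ x y z, ⁅D x y, h.pB z⁆ + ⁅D y z, h.pB x⁆ + ⁅D z x, h.pB y⁆ = 0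

theorem isCyclicDefect_defect {S : G →ₗ[R] G →ₗ[R] G} (hsymm : ∀ x y, S x y = S y x)
    (hSe : ∀ x y, ⁅S x y, h.ιB 1⁆ = 0) (hS : ∀ x y z, ⁅S x y, z⁆ + ⁅S y z, x⁆ + ⁅S z x, y⁆ = 0) :
    h.IsCyclicDefect (S.compr₂ h.defect) where
  symm x y := by rw [LinearMap.compr₂_apply, hsymm, LinearMap.compr₂_apply]
  rightAction_cyclic x y z := by
    have := congrArg h.pM (hS x y z)
    rw [map_add, map_add, h.pM_lie (hSe x y), h.pM_lie (hSe y z), h.pM_lie (hSe z x), ← neg_add,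
      ← neg_add, map_zero, neg_eq_zero] at this
    exact this
  lie_cyclic x y z := by
    have := congrArg h.pB (hS x y z)
    rw [map_add, map_add, h.pB_lie (hSe x y), h.pB_lie (hSe y z), h.pB_lie (hSe z x),
      map_zero] at this
    exact this

section IndependentPair

variable {h} {m₀ : M} {b₀ : B} (hm₀ : LinearIndependent R ![h.rightAction m₀ b₀, m₀])
include hm₀

theorem algebraMap_injective : Function.Injective (algebraMap R B) := by
  refine (injective_iff_map_eq_zero _).2 fun r hr => (hm₀.eq_zero_of_pair (s := 0) ?_).2
  rw [zero_smul, zero_add, ← h.rightAction_algebraMap, hr, map_zero]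

theorem eq_zero_of_mem_bot {d : B} (hd : d ∈ (⊥ : Subalgebra R B))
    (hact : h.rightAction m₀ d = 0) : d = 0 := by
  obtain ⟨r, rfl⟩ := Algebra.mem_bot.1 hd
  rw [(hm₀.eq_zero_of_pair (s := 0) (t := r) ?_).2, map_zero]
  rwa [zero_smul, zero_add, ← h.rightAction_algebraMap]

theorem eq_zero_of_commuting (hB : CommutingMapsProper R B) {f : B →ₗ[R] B}
    (hf : ∀ b, ⁅f b, b⁆ = 0) (hact : ∀ b, h.rightAction m₀ (f b) = 0) (b : B) : f b = 0 := by
  obtain ⟨k, hk⟩ := hB f hf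
  obtain ⟨r, hr⟩ := Algebra.mem_bot.1 (hk b₀)
  have hk₀ : k = 0 := by
    refine (hm₀.eq_zero_of_pair (t := r) ?_).1
    rw [← map_smul, ← h.rightAction_algebraMap, hr, ← map_add, add_sub_cancel, hact]
  refine eq_zero_of_mem_bot hm₀ ?_ (hact b)
  simpa only [hk₀, zero_smul, sub_zero] using hk b

end IndependentPair

namespace IsCyclicDefect

variable {h} {D : G →ₗ[R] G →ₗ[R] B} (hD : h.IsCyclicDefect D)
include hD

theorem apply_eq_zero {x y : G} (hx : h.pM x = 0) (hy : h.pM y = 0) : D x y = 0 :=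
  h.eq_zero_of_forall_rightAction_eq_zero fun m => by
    simpa [hx, hy] using hD.rightAction_cyclic x y (h.ιM m)

theorem rightAction_swap {x : G} (hx : h.pM x = 0) (m m' : M) :
    h.rightAction m (D x (h.ιM m')) + h.rightAction m' (D x (h.ιM m)) = 0 := by
  simpa [hx, hD.symm (h.ιM m) x] using hD.rightAction_cyclic x (h.ιM m') (h.ιM m)

theorem rightAction_self (hG : ∀ g : G, g + g = 0 → g = 0) {x : G} (hx : h.pM x = 0) (m : M) :
    h.rightAction m (D x (h.ιM m)) = 0 :=
  eq_zero_of_add_self_eq_zero_of_injective h.ιM_injective hG (hD.rightAction_swap hx m m)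

theorem lie_ιB_ιM (hG : ∀ g : G, g + g = 0 → g = 0) (b : B) (m : M) :
    ⁅D (h.ιB b) (h.ιM m), b⁆ = 0 :=
  eq_zero_of_add_self_eq_zero_of_injective h.ιB_injective hG <| by
    simpa [hD.symm (h.ιM m)] using hD.lie_cyclic (h.ιB b) (h.ιB b) (h.ιM m)

variable {m₀ : M} {b₀ : B} (hm₀ : LinearIndependent R ![h.rightAction m₀ b₀, m₀])
include hm₀

theorem apply_ιB_ιM (hG : ∀ g : G, g + g = 0 → g = 0) (hB : CommutingMapsProper R B)
    (b : B) (m : M) : D (h.ιB b) (h.ιM m) = 0 := by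
  have of_rightAction (m : M) (hact : ∀ b, h.rightAction m₀ (D (h.ιB b) (h.ιM m)) = 0) (b : B) :
      D (h.ιB b) (h.ιM m) = 0 :=
    eq_zero_of_commuting hm₀ hB (f := D.flip (h.ιM m) ∘ₗ h.ιB)
      (fun b => hD.lie_ιB_ιM hG b m) hact b
  have apply_m₀ := of_rightAction m₀ fun b => hD.rightAction_self hG (h.pM_ιB b) m₀
  refine of_rightAction m (fun b => ?_) b
  simpa [apply_m₀] using hD.rightAction_swap (h.pM_ιB b) m₀ m

variable [Algebra.IsCentral R B]

theorem apply_ιM_of_pM_eq_zero (hG : ∀ g : G, g + g = 0 → g = 0) (hB : CommutingMapsProper R B)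
    {x : G} (hx : h.pM x = 0) (m : M) : D x (h.ιM m) = 0 := by
  have central (m : M) : D x (h.ιM m) ∈ (⊥ : Subalgebra R B) :=
    mem_bot_of_forall_lie_eq_zero fun b => by
      simpa [hD.symm (h.ιM m), hD.apply_ιB_ιM hm₀ hG hB] using hD.lie_cyclic x (h.ιM m) (h.ιB b)
  have apply_m₀ := eq_zero_of_mem_bot hm₀ (central m₀) (hD.rightAction_self hG hx m₀)
  refine eq_zero_of_mem_bot hm₀ (central m) ?_
  simpa [apply_m₀] using hD.rightAction_swap hx m₀ m

theorem apply_ιM_ιM (hG : ∀ g : G, g + g = 0 → g = 0) (m m' : M) :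
    D (h.ιM m) (h.ιM m') = 0 := by
  have central (m m' : M) : D (h.ιM m) (h.ιM m') ∈ (⊥ : Subalgebra R B) :=
    mem_bot_of_forall_lie_eq_zero fun b => by
      simpa using hD.lie_cyclic (h.ιM m) (h.ιM m') (h.ιB b)
  have cyclic (m m' m'' : M) := hD.rightAction_cyclic (h.ιM m) (h.ιM m') (h.ιM m'')
  simp only [pM_ιM] at cyclic
  have apply_m₀_m₀ : D (h.ιM m₀) (h.ιM m₀) = 0 := by
    obtain ⟨r, hr⟩ := Algebra.mem_bot.1 (central m₀ m₀)
    obtain ⟨s, hs⟩ := Algebra.mem_bot.1 (central m₀ (h.rightAction m₀ b₀))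
    have := cyclic m₀ m₀ (h.rightAction m₀ b₀)
    rw [hD.symm (h.ιM (h.rightAction m₀ b₀)), ← hr, ← hs, rightAction_algebraMap,
      rightAction_algebraMap, add_assoc, ← add_smul] at this
    rw [← hr, (hm₀.eq_zero_of_pair this).1, map_zero]
  have apply_m₀ (m : M) : D (h.ιM m₀) (h.ιM m) = 0 := by
    refine eq_zero_of_mem_bot hm₀ (central m₀ m) ?_
    apply eq_zero_of_add_self_eq_zero_of_injective h.ιM_injective hG
    simpa [apply_m₀_m₀, hD.symm (h.ιM m)] using cyclic m₀ m₀ m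
  refine eq_zero_of_mem_bot hm₀ (central m m') ?_
  simpa [apply_m₀, hD.symm _ (h.ιM m₀)] using cyclic m m' m₀

theorem eq_zero (hG : ∀ g : G, g + g = 0 → g = 0) (hB : CommutingMapsProper R B) (x y : G) :
    D x y = 0 := by
  have split (g : G) : ∃ g₀ m, h.pM g₀ = 0 ∧ g = g₀ + h.ιM m :=
    ⟨g - h.ιM (h.pM g), h.pM g, by simp, by abel⟩
  obtain ⟨x₀, m, hx₀, rfl⟩ := split x
  obtain ⟨y₀, m', hy₀, rfl⟩ := split y
  rw [map_add, map_add, LinearMap.add_apply, LinearMap.add_apply, hD.apply_eq_zero hx₀ hy₀,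
    hD.symm _ y₀, hD.apply_ιM_of_pM_eq_zero hm₀ hG hB hx₀,
    hD.apply_ιM_of_pM_eq_zero hm₀ hG hB hy₀, hD.apply_ιM_ιM hm₀ hG]
  simp

end IsCyclicDefect

theorem trace_mem_bot_of_symmetrization_ιB_one_mem_bot [Algebra.IsCentral R B]
    (hG : ∀ g : G, g + g = 0 → g = 0) (hB : CommutingMapsProper R B) {m₀ : M} {b₀ : B}
    (hm₀ : LinearIndependent R ![h.rightAction m₀ b₀, m₀]) {q : G →ₗ[R] G →ₗ[R] G}
    (hq : ∀ x, ⁅q x x, x⁆ = 0)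
    (hqe : ∀ x, symmetrization q x (h.ιB 1) ∈ (⊥ : Subalgebra R G)) (x : G) :
    q x x ∈ (⊥ : Subalgebra R G) := by
  have symmetrization_lie (x y : G) : ⁅symmetrization q x y, h.ιB 1⁆ = 0 := by
    have := lie_symmetrization_cyclic hG hq x y (h.ιB 1)
    rwa [lie_eq_zero_of_mem_bot (hqe y), symmetrization_comm q _ x,
      lie_eq_zero_of_mem_bot (hqe x), add_zero, add_zero] at this
  have trace_lie : ⁅q x x, h.ιB 1⁆ = 0 := by
    have := lie_trace_add_lie_symmetrization hG hq x (h.ιB 1)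
    rwa [lie_eq_zero_of_mem_bot (hqe x), add_zero] at this
  have hD := h.isCyclicDefect_defect (symmetrization_comm q) symmetrization_lie
    (lie_symmetrization_cyclic hG hq)
  refine h.mem_bot_of_defect_eq_zero trace_lie ?_
  apply eq_zero_of_add_self_eq_zero_of_injective h.ιB_injective hG
  rw [← map_add]
  exact hD.eq_zero hm₀ hG hB x x

theorem exists_subStandardTrace_mem_bot [Algebra.IsCentral R B]
    (hG : ∀ g : G, g + g = 0 → g = 0) (hB : CommutingMapsProper R B) {m₀ : M} {b₀ : B}
    (hm₀ : LinearIndependent R ![h.rightAction m₀ b₀, m₀]) {q : G →ₗ[R] G →ₗ[R] G}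
    (hq : ∀ x, q x x * x = x * q x x) :
    ∃ (z : R) (μ : G →ₗ[R] R), ∀ x, subStandardTrace q z μ x x ∈ (⊥ : Subalgebra R G) := by
  have hq' (x : G) : ⁅q x x, x⁆ = 0 := sub_eq_zero.2 (hq x)
  obtain ⟨z, μ, hzμ⟩ :=
    h.exists_symmetrization_subStandardTrace_mem_bot hG hB (algebraMap_injective hm₀) hq'
  exact ⟨z, μ, h.trace_mem_bot_of_symmetrization_ιB_one_mem_bot hG hB hm₀
    (lie_subStandardTrace_self hq' z μ) hzμ⟩

end GMA

end AssociativeCommutator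

theorem stmt8_general {R B M N G : Type*} [CommRing R] [Ring B] [Algebra R B]
    [AddCommGroup M] [Module R M] [AddCommGroup N] [Module R N] [Ring G] [Algebra R G]
    (h : GMA R R B M N G) (htf : ∀ g : G, g + g = 0 → g = 0)
    (hBcen : (Subring.center B : Set B) = Set.range (algebraMap R B))
    (h1 : ∀ f : B →ₗ[R] B, (∀ b, f b * b = b * f b) →
      ∃ z ∈ Subring.center B, ∃ η : B →ₗ[R] B,
        (∀ b, η b ∈ Subring.center B) ∧ ∀ b, f b = z * b + η b)
    (h3 : ∃ (m₀ : M) (b₀ : B), ∀ r s : R,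
      r • h.pM (h.ιM m₀ * h.ιB b₀) + s • m₀ = 0 → r = 0 ∧ s = 0)
    (q : G →ₗ[R] G →ₗ[R] G) (hcomm : ∀ x : G, q x x * x = x * q x x) :
    ∃ z ∈ Subring.center G, ∃ μ : G →ₗ[R] G, (∀ x, μ x ∈ Subring.center G) ∧
      ∃ p : G →ₗ[R] G →ₗ[R] G, (∀ x y, p x y ∈ Subring.center G) ∧
        ∀ x : G, q x x = z * x ^ 2 + μ x * x + p x x := by
  have : Algebra.IsCentral R B := ⟨fun _ hb => Algebra.mem_bot.2 (hBcen.subset hb)⟩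
  have hB := commutingMapsProper_of_center h1
  obtain ⟨m₀, b₀, hpair⟩ := h3
  have hm₀ : LinearIndependent R ![h.rightAction m₀ b₀, m₀] := LinearIndependent.pair_iff.2 hpair
  obtain ⟨z, μ, hzμ⟩ := h.exists_subStandardTrace_mem_bot htf hB hm₀ hcomm
  have hcenter (r : R) : algebraMap R G r ∈ Subring.center G :=
    Subring.mem_center_iff.2 fun g => (Algebra.commutes r g).symm
  refine ⟨algebraMap R G z, hcenter z, Algebra.linearMap R G ∘ₗ μ, fun x => hcenter (μ x),
    (subStandardTrace q z μ).compr₂ (Algebra.linearMap R G ∘ₗ h.pA), fun x y => hcenter _,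
    fun x => ?_⟩
  rw [LinearMap.compr₂_apply, LinearMap.comp_apply, LinearMap.comp_apply, Algebra.linearMap_apply,
    Algebra.linearMap_apply, h.algebraMap_pA_of_mem_bot (hzμ x), subStandardTrace_apply,
    Algebra.smul_def, Algebra.smul_def, pow_two]
  abel

/-- **Proposition 3.17.**  Let `G = [R M; N B]` be a `2`-torsionfree generalized
matrix algebra over a commutative ring `R` whose `(1,1)`-corner is `R` itself, where
`B` is a noncommutative `R`-algebra and both `G` and `B` are central over `R`.  If
(1) every commuting `R`-linear map on `B` is proper,
(2) for `r ∈ R` and `m ∈ M`, `r m = 0` implies `r = 0` or `m = 0`, and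
(3) there exist `m₀ ∈ M` and `b₀ ∈ B` such that `m₀ b₀` and `m₀` are `R`-linearly
independent, then for every `R`-bilinear map `q : G × G → G`, every commuting trace
`T_q` of `q` is proper. -/
theorem stmt8 (R B M N G : Type*) [CommRing R]
    [Ring B] [Algebra R B]
    [AddCommGroup M] [Module R M] [AddCommGroup N] [Module R N]
    [Ring G] [Algebra R G]
    (h : GMA R R B M N G)
    (hMN : (∃ m : M, m ≠ 0) ∨ (∃ n : N, n ≠ 0))
    (htf : ∀ g : G, g + g = 0 → g = 0)
    (hBnc : ∃ b b' : B, b * b' ≠ b' * b)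
    (hGcen : (Subring.center G : Set G) = Set.range (algebraMap R G))
    (hBcen : (Subring.center B : Set B) = Set.range (algebraMap R B))
    (h1 : ∀ f : B →ₗ[R] B, (∀ b, f b * b = b * f b) →
            ∃ z ∈ Subring.center B, ∃ η : B →ₗ[R] B,
              (∀ b, η b ∈ Subring.center B) ∧ ∀ b, f b = z * b + η b)
    (h2 : ∀ (r : R) (m : M), r • m = 0 → r = 0 ∨ m = 0)
    (h3 : ∃ (m₀ : M) (b₀ : B), ∀ r s : R,
            r • h.pM (h.ιM m₀ * h.ιB b₀) + s • m₀ = 0 → r = 0 ∧ s = 0)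
    (q : G →ₗ[R] G →ₗ[R] G)
    (hcomm : ∀ x : G, q x x * x = x * q x x) :
    ∃ z ∈ Subring.center G, ∃ μ : G →ₗ[R] G, (∀ x, μ x ∈ Subring.center G) ∧
      ∃ p : G →ₗ[R] G →ₗ[R] G, (∀ x y, p x y ∈ Subring.center G) ∧
        ∀ x : G, q x x = z * x ^ 2 + μ x * x + p x x :=
  stmt8_general h htf hBcen h1 h3 q hcomm
end

section
/- Let R be a 2-torsionfree commutative domain and let M_n(R) be the full algebra of n×n matrices over R. Then for every R-bilinear map q : M_n(R) × M_n(R) → M_n(R), every commuting trace T_q : M_n(R) → M_n(R) of q is proper. -/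
set_option synthInstance.maxHeartbeats 1000000
set_option maxHeartbeats 1000000

/-!
Let `S x y = q x y + q y x`. Polarizing `⁅q x x, x⁆ = 0` gives
`⁅S x y, w⁆ + ⁅S y w, x⁆ + ⁅S w x, y⁆ = 0`. For `w` a diagonal matrix unit, its `(k, l)` entry
expresses the off-diagonal entries of `S x y`, and for `w` the matrix unit `E k l` it expresses
the differences of the diagonal entries. Subtracting a suitable `z x y + μ x y` from `q`, which
preserves the hypothesis, makes `S` central-valued first on pairs of diagonal matrices, then on
pairs with one diagonal member, and finally on all pairs. On pairs of diagonal matrices `z` and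
`μ` are read off from the functionals `d ↦ S (diagonal d) (E k l) k l`, which behave like the
divided differences of a quadratic map and hence have the form `z (d k + d l) + μ d`.
-/

namespace CommutingTrace

open Matrix

section Torsion

variable {V R A : Type*} [Semiring R] [AddCommGroup A] [Module R A]

theorem eq_zero_of_smul_add_smul_eq_zero (h2 : IsSMulRegular A 2) {σ : V → A} {f : V → R} {w : V}
    (hw : f w = 1) (hσ : ∀ x y, f y • σ x + f x • σ y = 0) (x : V) : σ x = 0 := by
  have hσw : σ w = 0 := h2.right_eq_zero_of_smul (by simpa [hw, two_nsmul] using hσ w w)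
  simpa [hw, hσw] using hσ x w

theorem eq_zero_of_add_smul_add_smul_eq_zero (h2 : IsSMulRegular A 2) {σ : V → V → A} {f : V → R}
    {w : V} (hw : f w = 1) (hσw : σ w w = 0) (hsymm : ∀ x, σ x w = σ w x)
    (hσ : ∀ x y, σ x y + f x • σ y w + f y • σ w x = 0) (x y : V) : σ x y = 0 := by
  have hleft (x) : σ w x = 0 :=
    h2.right_eq_zero_of_smul (by simpa [hw, hσw, hsymm, two_nsmul] using hσ x w)
  simpa [hsymm, hleft] using hσ x y

end Torsion

section DividedDifference

variable {ι R : Type*} [CommRing R]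

theorem quotient_eq_of_sub_eq_mul {s : Set ι} {g : (ι → R) → ι → R} {ρ : ι → ι → R}
    (hg : ∀ d, ∀ k ∈ s, ∀ l ∈ s, k ≠ l → g d k - g d l = (d k - d l) * ρ k l)
    {k l k' l' : ι} (hk : k ∈ s) (hl : l ∈ s) (hk' : k' ∈ s) (hl' : l' ∈ s)
    (hkl : k ≠ l) (hkl' : k' ≠ l') : ρ k l = ρ k' l' := by
  classical
  have symm {k l} (hk : k ∈ s) (hl : l ∈ s) (hkl : k ≠ l) : ρ k l = ρ l k := by
    have h₁ := hg (Pi.single k 1) k hk l hl hkl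
    have h₂ := hg (Pi.single k 1) l hl k hk hkl.symm
    simp only [Pi.single_eq_same, Pi.single_eq_of_ne hkl.symm] at h₁ h₂
    linear_combination -h₁ - h₂
  have right {k l p} (hk : k ∈ s) (hl : l ∈ s) (hp : p ∈ s) (hkl : k ≠ l) (hkp : k ≠ p) :
      ρ k l = ρ k p := by
    obtain rfl | hlp := eq_or_ne l p
    · rfl
    have h₁ := hg (Pi.single k 1) k hk l hl hkl
    have h₂ := hg (Pi.single k 1) k hk p hp hkp
    have h₃ := hg (Pi.single k 1) l hl p hp hlp
    simp only [Pi.single_eq_same, Pi.single_eq_of_ne hkl.symm, Pi.single_eq_of_ne hkp.symm]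
      at h₁ h₂ h₃
    linear_combination h₂ - h₁ - h₃
  obtain rfl | hlk' := eq_or_ne l k'
  · rw [symm hk hl hkl, right hl hk hl' hkl.symm hkl']
  · rw [symm hk hl hkl, right hl hk hk' hkl.symm hlk', symm hl hk' hlk',
      right hk' hl hl' hlk'.symm hkl']

/-- The functionals `τ k l` are the polarized divided differences of the map `s`, thought of as
the polarization of a quadratic map `(ι → R) → (ι → R)`. For a genuine quadratic map `Q` of the
form `Q d k = z * d k ^ 2 + μ d * d k + ν d` they are `τ k l d = z * (d k + d l) + μ d`. -/
def IsDividedDifference (s : (ι → R) → (ι → R) → ι → R) (τ : ι → ι → (ι → R) →ₗ[R] R) : Prop :=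
  ∀ d e k l, k ≠ l → s d e k - s d e l = (d k - d l) * τ k l e + (e k - e l) * τ k l d

namespace IsDividedDifference

variable {s : (ι → R) → (ι → R) → ι → R} {τ : ι → ι → (ι → R) →ₗ[R] R} {j k l k' l' : ι}

theorem symm (h2 : IsSMulRegular R 2) (h : IsDividedDifference s τ) (hkl : k ≠ l) :
    τ k l = τ l k := by
  classical
  ext1 d
  refine sub_eq_zero.1 (eq_zero_of_smul_add_smul_eq_zero h2 (σ := fun d ↦ τ k l d - τ l k d)
    (f := fun d ↦ d k - d l) (w := Pi.single k 1) (by simp [hkl.symm]) (fun d e ↦ ?_) d)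
  simp only [smul_eq_mul]
  linear_combination -h d e k l hkl - h d e l k hkl.symm

theorem apply_single_left_eq [DecidableEq ι] (h2 : IsSMulRegular R 2) (h : IsDividedDifference s τ)
    (hkl : k ≠ l) (hkl' : k ≠ l') : τ k l (Pi.single k 1) = τ k l' (Pi.single k 1) := by
  obtain rfl | hll' := eq_or_ne l l'
  · rfl
  have h₁ := h (Pi.single k 1) (Pi.single k 1) k l hkl
  have h₂ := h (Pi.single k 1) (Pi.single k 1) k l' hkl'
  have h₃ := h (Pi.single k 1) (Pi.single k 1) l l' hll'
  simp only [Pi.single_eq_same, Pi.single_eq_of_ne hkl.symm, Pi.single_eq_of_ne hkl'.symm]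
    at h₁ h₂ h₃
  apply h2
  simp only [two_nsmul]
  linear_combination h₂ - h₁ - h₃

theorem apply_single_eq_of_ne [DecidableEq ι] (h : IsDividedDifference s τ) (hk : k ≠ j)
    (hl : l ≠ j) (hk' : k' ≠ j) (hl' : l' ≠ j) (hkl : k ≠ l) (hkl' : k' ≠ l') :
    τ k l (Pi.single j 1) = τ k' l' (Pi.single j 1) := by
  refine quotient_eq_of_sub_eq_mul (s := {j}ᶜ) (g := fun d ↦ s d (Pi.single j 1))
    (ρ := fun k l ↦ τ k l (Pi.single j 1)) (fun d k hk l hl hkl ↦ ?_) hk hl hk' hl' hkl hkl'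
  simpa [Pi.single_eq_of_ne hk, Pi.single_eq_of_ne hl] using h d (Pi.single j 1) k l hkl

theorem exchange [DecidableEq ι] (h2 : IsSMulRegular R 2) (h : IsDividedDifference s τ)
    (hjk : j ≠ k) (hjl : j ≠ l) (hkl : k ≠ l) :
    τ j k (Pi.single j 1) - τ k l (Pi.single j 1) =
      τ k j (Pi.single k 1) - τ j l (Pi.single k 1) := by
  have h₁ := h (Pi.single j 1) (Pi.single k 1) j k hjk
  have h₂ := h (Pi.single j 1) (Pi.single k 1) j l hjl
  have h₃ := h (Pi.single j 1) (Pi.single k 1) k l hkl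
  simp only [Pi.single_eq_same, Pi.single_eq_of_ne hjk, Pi.single_eq_of_ne hjk.symm,
    Pi.single_eq_of_ne hjl.symm, Pi.single_eq_of_ne hkl.symm] at h₁ h₂ h₃
  rw [h.symm h2 hjk.symm]
  linear_combination h₁ - h₂ + h₃

theorem exists_quadraticCoeff [DecidableEq ι] (h2 : IsSMulRegular R 2)
    (h : IsDividedDifference s τ) :
    ∃ z : R, ∀ j k l, j ≠ k → j ≠ l → k ≠ l →
      τ j k (Pi.single j 1) - τ k l (Pi.single j 1) = z := by
  by_cases htriple : ∃ a b c : ι, a ≠ b ∧ a ≠ c ∧ b ≠ c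
  swap
  · exact ⟨0, fun j k l hjk hjl hkl ↦ (htriple ⟨j, k, l, hjk, hjl, hkl⟩).elim⟩
  obtain ⟨a, b, c, hab, hac, hbc⟩ := htriple
  have indep {j k l k' l'} (hjk : j ≠ k) (hjl : j ≠ l) (hkl : k ≠ l)
      (hjk' : j ≠ k') (hjl' : j ≠ l') (hkl' : k' ≠ l') :
      τ j k (Pi.single j 1) - τ k l (Pi.single j 1) =
        τ j k' (Pi.single j 1) - τ k' l' (Pi.single j 1) := by
    rw [h.apply_single_left_eq h2 hjk hjk',
      h.apply_single_eq_of_ne hjk.symm hjl.symm hjk'.symm hjl'.symm hkl hkl']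
  refine ⟨τ a b (Pi.single a 1) - τ b c (Pi.single a 1), fun j k l hjk hjl hkl ↦ ?_⟩
  obtain rfl | hja := eq_or_ne j a
  · exact indep hjk hjl hkl hab hac hbc
  obtain ⟨p, hjp, hap⟩ : ∃ p, j ≠ p ∧ a ≠ p := by
    obtain rfl | hjb := eq_or_ne j b
    exacts [⟨c, hbc, hac⟩, ⟨b, hjb, hab⟩]
  rw [indep hjk hjl hkl hja hjp hap, h.exchange h2 hja hjp hap,
    indep hja.symm hap hjp hab hac hbc]

theorem exists_eq_mul_add [Finite ι] [Nontrivial ι] (h2 : IsSMulRegular R 2)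
    (h : IsDividedDifference s τ) :
    ∃ (z : R) (μ : (ι → R) →ₗ[R] R), ∀ k l, k ≠ l → ∀ d, τ k l d = z * (d k + d l) + μ d := by
  classical
  obtain ⟨z, hz⟩ := h.exists_quadraticCoeff h2
  choose next hnext using fun k : ι ↦ exists_ne k
  let μ : (ι → R) →ₗ[R] R :=
    (Pi.basisFun R ι).constr R fun j ↦ τ j (next j) (Pi.single j 1) - z
  have hμ {j k} (hjk : j ≠ k) : μ (Pi.single j 1) = τ j k (Pi.single j 1) - z := by
    rw [← Pi.basisFun_apply, Module.Basis.constr_basis,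
      Pi.basisFun_apply, h.apply_single_left_eq h2 (hnext j).symm hjk]
  refine ⟨z, μ, fun k l hkl ↦ ?_⟩
  let π : ι → (ι → R) →ₗ[R] R := LinearMap.proj
  suffices τ k l = z • (π k + π l) + μ from LinearMap.congr_fun this
  refine (Pi.basisFun R ι).ext fun j ↦ ?_
  simp only [Pi.basisFun_apply, LinearMap.add_apply, LinearMap.smul_apply, π, LinearMap.proj_apply,
    smul_eq_mul]
  obtain rfl | hjk := eq_or_ne j k
  · simp [hμ hkl, hkl.symm]
  obtain rfl | hjl := eq_or_ne j l
  · simp [hμ hjk, hkl, h.symm h2 hkl]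
  · simp [hμ hjk, hjk.symm, hjl.symm, ← hz j k l hjk hjl hkl]

end IsDividedDifference

end DividedDifference

section Algebra

variable {R A : Type*} [CommRing R] [Ring A] [Algebra R A]

/-- The trace `x ↦ q x x` of the bilinear map `q` is commuting. -/
def IsCommuting (q : A →ₗ[R] A →ₗ[R] A) : Prop :=
  ∀ x, Commute (q x x) x

/-- The symmetric bilinear map attached to the trace of `q`, without the factor `1 / 2`. -/
def polarization (q : A →ₗ[R] A →ₗ[R] A) : A →ₗ[R] A →ₗ[R] A :=
  q + q.flip

/-- A bilinear map whose trace is the non-central part `x ↦ z x² + μ(x) x` of a proper trace. -/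
def properPart (z : R) (μ : A →ₗ[R] R) : A →ₗ[R] A →ₗ[R] A :=
  z • LinearMap.mul R A + LinearMap.lsmul R A ∘ₗ μ

variable {q : A →ₗ[R] A →ₗ[R] A}

theorem polarization_apply (x y : A) : polarization q x y = q x y + q y x := rfl

theorem polarization_comm (x y : A) : polarization q x y = polarization q y x :=
  add_comm _ _

theorem properPart_apply (z : R) (μ : A →ₗ[R] R) (x y : A) :
    properPart z μ x y = z • (x * y) + μ x • y := rfl

theorem properPart_add (z z' : R) (μ μ' : A →ₗ[R] R) :
    properPart (z + z') (μ + μ') = properPart z μ + properPart z' μ' := by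
  simp only [properPart, add_smul, LinearMap.comp_add]
  abel

theorem polarization_sub_properPart_apply (z : R) (μ : A →ₗ[R] R) (x y : A) :
    polarization (q - properPart z μ) x y =
      polarization q x y - z • (x * y + y * x) - μ x • y - μ y • x := by
  simp only [polarization_apply, LinearMap.sub_apply, properPart_apply]
  module

namespace IsCommuting

theorem sub_properPart (hq : IsCommuting q) (z : R) (μ : A →ₗ[R] R) :
    IsCommuting (q - properPart z μ) := fun x ↦
  (hq x).sub_left ((((Commute.refl x).mul_left (Commute.refl x)).smul_left z).add_left
    ((Commute.refl x).smul_left (μ x)))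

theorem commute_polarization_self (hq : IsCommuting q) (x : A) :
    Commute (polarization q x x) x :=
  (hq x).add_left (hq x)

theorem lie_polarization_cyclic (hq : IsCommuting q) (x y w : A) :
    ⁅polarization q x y, w⁆ + ⁅polarization q y w, x⁆ + ⁅polarization q w x, y⁆ = 0 := by
  have hlie (x) : ⁅q x x, x⁆ = 0 := (hq x).lie_eq
  have h₁ := hlie (x + y + w)
  have h₂ := hlie (x + y)
  have h₃ := hlie (y + w)
  have h₄ := hlie (w + x)
  simp only [polarization_apply, map_add, LinearMap.add_apply, Ring.lie_def, add_mul, mul_add]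
    at h₁ h₂ h₃ h₄ hlie ⊢
  linear_combination (norm := abel) h₁ - h₂ - h₃ - h₄ + hlie x + hlie y + hlie w

end IsCommuting

end Algebra

section Matrix

variable {ι R : Type*} [Fintype ι] [CommRing R]

theorem lie_apply_of_isDiag {M : Matrix ι ι R} (hM : M.IsDiag) (N : Matrix ι ι R) (k l : ι) :
    ⁅M, N⁆ k l = N k l * (M k k - M l l) := by
  classical
  rw [← hM.diagonal_diag, Ring.lie_def, Matrix.sub_apply, diagonal_mul, mul_diagonal]
  simp only [diagonal_apply_eq, diag_apply]
  ring

variable [DecidableEq ι]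

theorem lie_diagonal_apply (M : Matrix ι ι R) (d : ι → R) (k l : ι) :
    ⁅M, diagonal d⁆ k l = (d l - d k) * M k l := by
  rw [Ring.lie_def, Matrix.sub_apply, mul_diagonal, diagonal_mul]
  ring

theorem lie_single_apply_self (M : Matrix ι ι R) (k l : ι) :
    ⁅M, single k l 1⁆ k l = M k k - M l l := by
  simp [Ring.lie_def]

theorem mem_center_iff {M : Matrix ι ι R} :
    M ∈ Subring.center (Matrix ι ι R) ↔ M.IsDiag ∧ ∀ k l, M k k = M l l := by
  rw [← SetLike.mem_coe, Subring.coe_center, center_eq_range]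
  constructor
  · rintro ⟨r, rfl⟩
    exact ⟨isDiag_diagonal _, by simp⟩
  · rintro ⟨hdiag, hconst⟩
    rcases isEmpty_or_nonempty ι with _ | ⟨⟨i⟩⟩
    · exact ⟨0, Subsingleton.elim _ _⟩
    · refine ⟨M i i, ?_⟩
      rw [scalar_apply, ← hdiag.diagonal_diag]
      simp [hconst _ i]

theorem exists_linearMap_mem_center :
    ∃ c : Matrix ι ι R →ₗ[R] Matrix ι ι R, (∀ M, c M ∈ Subring.center (Matrix ι ι R)) ∧
      ∀ M ∈ Subring.center (Matrix ι ι R), c M = M := by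
  rcases isEmpty_or_nonempty ι with _ | ⟨⟨i⟩⟩
  · exact ⟨0, fun _ ↦ Subring.zero_mem _, fun _ _ ↦ Subsingleton.elim _ _⟩
  refine ⟨(entryLinearMap R R i i).smulRight 1, fun M ↦ ?_, fun M hM ↦ ?_⟩
  · exact mem_center_iff.2 ⟨isDiag_smul_one _ _, by simp⟩
  · obtain ⟨hdiag, hconst⟩ := mem_center_iff.1 hM
    ext k l
    obtain rfl | hkl := eq_or_ne k l
    · simp [hconst i k]
    · simp [hkl, hdiag hkl]

theorem mem_center_of_two_nsmul_mem (h2 : IsSMulRegular R 2) {M : Matrix ι ι R}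
    (hM : 2 • M ∈ Subring.center (Matrix ι ι R)) : M ∈ Subring.center (Matrix ι ι R) := by
  rw [Subring.mem_center_iff] at hM ⊢
  exact fun N ↦ h2.matrix (by simpa only [mul_smul_comm, smul_mul_assoc] using hM N)

variable {q : Matrix ι ι R →ₗ[R] Matrix ι ι R →ₗ[R] Matrix ι ι R}

namespace IsCommuting

theorem polarization_diagonal_diagonal_isDiag (h2 : IsSMulRegular R 2) (hq : IsCommuting q)
    (d e : ι → R) : (polarization q (diagonal d) (diagonal e)).IsDiag := by
  intro k l hkl
  let σ (d e : ι → R) : R := polarization q (diagonal d) (diagonal e) k l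
  let f (d : ι → R) : R := d l - d k
  have hf : f (Pi.single l 1) = 1 := by simp [f, hkl]
  refine eq_zero_of_add_smul_add_smul_eq_zero h2 (σ := σ) (f := f) (w := Pi.single l 1)
    hf ?_ (fun d ↦ by simp only [σ, polarization_comm]) (fun d e ↦ ?_) d e
  · have h := congr($((hq.commute_polarization_self (diagonal (Pi.single l 1))).lie_eq) k l)
    rw [lie_diagonal_apply] at h
    simpa [hkl] using h
  · have h := congr($(hq.lie_polarization_cyclic (diagonal d) (diagonal e)
      (diagonal (Pi.single l 1))) k l)
    simp only [Matrix.add_apply, lie_diagonal_apply] at h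
    change f (Pi.single l 1) * σ d e + f d * σ e _ + f e * σ _ d = 0 at h
    simpa [hf] using h

theorem polarization_apply_sub_apply (hq : IsCommuting q) (x y : Matrix ι ι R) (k l : ι) :
    polarization q x y k k - polarization q x y l l =
      -⁅polarization q y (single k l 1), x⁆ k l - ⁅polarization q x (single k l 1), y⁆ k l := by
  have h := congr($(hq.lie_polarization_cyclic x y (single k l 1)) k l)
  rw [polarization_comm _ x] at h
  simp only [Matrix.add_apply, lie_single_apply_self, Matrix.zero_apply] at h
  linear_combination h

theorem isDividedDifference (hq : IsCommuting q) :
    IsDividedDifference (fun d e ↦ (polarization q (diagonal d) (diagonal e)).diag)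
      fun k l ↦ entryLinearMap R R k l ∘ₗ (polarization q).flip (single k l 1) ∘ₗ
        diagonalLinearMap ι R R := by
  intro d e k l _
  have h := hq.polarization_apply_sub_apply (diagonal d) (diagonal e) k l
  simp only [lie_diagonal_apply] at h
  change polarization q (diagonal d) (diagonal e) k k -
      polarization q (diagonal d) (diagonal e) l l =
    (d k - d l) * polarization q (diagonal e) (single k l 1) k l +
    (e k - e l) * polarization q (diagonal d) (single k l 1) k l
  linear_combination h

theorem exists_polarization_diagonal_diagonal_mem_center [Nontrivial ι]
    (h2 : IsSMulRegular R 2) (hq : IsCommuting q) :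
    ∃ (z : R) (μ : Matrix ι ι R →ₗ[R] R), ∀ d e,
      polarization (q - properPart z μ) (diagonal d) (diagonal e) ∈
        Subring.center (Matrix ι ι R) := by
  obtain ⟨z, μ, hτ⟩ := hq.isDividedDifference.exists_eq_mul_add h2
  refine ⟨z, μ ∘ₗ diagLinearMap ι R R, fun d e ↦ mem_center_iff.2
    ⟨(hq.sub_properPart _ _).polarization_diagonal_diagonal_isDiag h2 d e, fun k l ↦ ?_⟩⟩
  obtain rfl | hkl := eq_or_ne k l
  · rfl
  have h := hq.isDividedDifference d e k l hkl
  rw [hτ k l hkl, hτ k l hkl] at h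
  have hμ (d) : (μ ∘ₗ diagLinearMap ι R R) (diagonal d) = μ d := congr_arg μ (diag_diagonal d)
  simp only [polarization_sub_properPart_apply, hμ, Matrix.sub_apply, Matrix.smul_apply,
    Matrix.add_apply, diagonal_mul_diagonal, diagonal_apply_eq, diag_apply, smul_eq_mul] at h ⊢
  linear_combination h

theorem polarization_diagonal_isDiag (h2 : IsSMulRegular R 2) (hq : IsCommuting q)
    (hdiag : ∀ d e, polarization q (diagonal d) (diagonal e) ∈ Subring.center (Matrix ι ι R))
    (d : ι → R) (y : Matrix ι ι R) : (polarization q (diagonal d) y).IsDiag := by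
  intro k l hkl
  refine eq_zero_of_smul_add_smul_eq_zero h2
    (σ := fun d ↦ polarization q (diagonal d) y k l) (f := fun d ↦ d l - d k)
    (w := Pi.single l 1) (by simp [hkl]) (fun d e ↦ ?_) d
  have hcentral : ⁅polarization q (diagonal d) (diagonal e), y⁆ = 0 :=
    Commute.lie_eq (Subring.mem_center_iff.1 (hdiag d e) y).symm
  have h := congr($(hq.lie_polarization_cyclic y (diagonal d) (diagonal e)) k l)
  rw [hcentral, polarization_comm y] at h
  simpa [lie_diagonal_apply] using h

theorem polarization_diagonal_sub_eq_mul (h2 : IsSMulRegular R 2) (hq : IsCommuting q)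
    (hdiag : ∀ d e, polarization q (diagonal d) (diagonal e) ∈ Subring.center (Matrix ι ι R))
    (d : ι → R) (y : Matrix ι ι R) {k l : ι} (hkl : k ≠ l) :
    polarization q (diagonal d) y k k - polarization q (diagonal d) y l l =
      (d k - d l) * (polarization q y (single k l 1) k l -
        y k l * polarization q (single k l 1) (single l k 1) l k) := by
  have hstep (y) (k l) := hq.polarization_apply_sub_apply (diagonal d) y k l
  simp only [lie_diagonal_apply,
    lie_apply_of_isDiag (hq.polarization_diagonal_isDiag h2 hdiag d _)] at hstep
  have hunit := hstep (single k l 1) l k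
  rw [single_apply_of_row_ne hkl] at hunit
  linear_combination hstep y k l + y k l * hunit

theorem exists_polarization_diagonal_mem_center [Nontrivial ι] (h2 : IsSMulRegular R 2)
    (hq : IsCommuting q)
    (hdiag : ∀ d e, polarization q (diagonal d) (diagonal e) ∈ Subring.center (Matrix ι ι R)) :
    ∃ ν : Matrix ι ι R →ₗ[R] R, ∀ d y,
      polarization (q - properPart 0 ν) (diagonal d) y ∈ Subring.center (Matrix ι ι R) := by
  obtain ⟨i, j, hij⟩ := exists_pair_ne ι
  let ν : Matrix ι ι R →ₗ[R] R := (entryLinearMap R R i i - entryLinearMap R R j j) ∘ₗ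
    polarization q (diagonal (Pi.single i 1))
  have hν (y) : ν y = polarization q (diagonal (Pi.single i 1)) y i i -
    polarization q (diagonal (Pi.single i 1)) y j j := rfl
  have hν_diagonal (d) : ν (diagonal d) = 0 :=
    sub_eq_zero.2 ((mem_center_iff.1 (hdiag _ d)).2 i j)
  have hsub (d y k l) (hkl : k ≠ l) :
      polarization q (diagonal d) y k k - polarization q (diagonal d) y l l =
        (d k - d l) * ν y := by
    have hquot (d) {k l} (hkl : k ≠ l) := hq.polarization_diagonal_sub_eq_mul h2 hdiag d y hkl
    have hconst := quotient_eq_of_sub_eq_mul (s := Set.univ)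
      (g := fun d ↦ (polarization q (diagonal d) y).diag)
      (fun d k _ l _ hkl ↦ hquot d hkl) trivial trivial trivial trivial hkl hij
    rw [hν, hquot _ hkl, hquot _ hij, hconst]
    simp [hij.symm]
  refine ⟨ν, fun d y ↦ mem_center_iff.2 ⟨fun k l hkl ↦ ?_, fun k l ↦ ?_⟩⟩
  · simp [polarization_sub_properPart_apply, hν_diagonal, hkl,
      hq.polarization_diagonal_isDiag h2 hdiag d y hkl]
  · obtain rfl | hkl := eq_or_ne k l
    · rfl
    simp only [polarization_sub_properPart_apply, hν_diagonal, zero_smul, sub_zero,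
      Matrix.sub_apply, Matrix.smul_apply, diagonal_apply_eq, smul_eq_mul]
    linear_combination hsub d y k l hkl

theorem polarization_isDiag (hq : IsCommuting q)
    (hdiag : ∀ d y, polarization q (diagonal d) y ∈ Subring.center (Matrix ι ι R))
    (x y : Matrix ι ι R) : (polarization q x y).IsDiag := by
  intro k l hkl
  have hcentral (x y : Matrix ι ι R) : ⁅polarization q (diagonal (Pi.single l 1)) x, y⁆ = 0 :=
    Commute.lie_eq (Subring.mem_center_iff.1 (hdiag _ x) y).symm
  have h := congr($(hq.lie_polarization_cyclic x y (diagonal (Pi.single l 1))) k l)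
  rw [polarization_comm y, hcentral, hcentral] at h
  simpa [lie_diagonal_apply, hkl] using h

theorem polarization_mem_center (h2 : IsSMulRegular R 2) (hq : IsCommuting q)
    (hdiag : ∀ d y, polarization q (diagonal d) y ∈ Subring.center (Matrix ι ι R))
    (x y : Matrix ι ι R) : polarization q x y ∈ Subring.center (Matrix ι ι R) := by
  refine mem_center_iff.2 ⟨hq.polarization_isDiag hdiag x y, fun k l ↦ ?_⟩
  obtain rfl | hkl := eq_or_ne k l
  · rfl
  have hstep (x y) (k l) := hq.polarization_apply_sub_apply x y k l
  simp only [lie_apply_of_isDiag (hq.polarization_isDiag hdiag _ _)] at hstep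
  refine sub_eq_zero.1 (eq_zero_of_add_smul_add_smul_eq_zero h2
    (σ := fun x y ↦ polarization q x y k k - polarization q x y l l) (f := fun x ↦ x k l)
    (w := single k l 1) (single_apply_same ..) ?_ (fun x ↦ by simp only [polarization_comm])
    (fun x y ↦ ?_) x y)
  · have h := hstep (single k l 1) (single k l 1) l k
    rw [single_apply_of_row_ne hkl] at h
    linear_combination -h
  · simp only [smul_eq_mul, polarization_comm (single k l (1 : R)) x]
    linear_combination hstep x y k l

theorem exists_sub_properPart_mem_center (h2 : IsSMulRegular R 2) (hq : IsCommuting q) :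
    ∃ (z : R) (μ : Matrix ι ι R →ₗ[R] R), ∀ x,
      (q - properPart z μ) x x ∈ Subring.center (Matrix ι ι R) := by
  obtain _ | _ := subsingleton_or_nontrivial ι
  · exact ⟨0, 0, fun x ↦ mem_center_iff.2
      ⟨isDiag_of_subsingleton _, fun k l ↦ by rw [Subsingleton.elim k l]⟩⟩
  obtain ⟨z, μ, hμ⟩ := hq.exists_polarization_diagonal_diagonal_mem_center h2
  have hq₁ := hq.sub_properPart z μ
  obtain ⟨ν, hν⟩ := hq₁.exists_polarization_diagonal_mem_center h2 hμ
  have hcentral := (hq₁.sub_properPart 0 ν).polarization_mem_center h2 hν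
  refine ⟨z + 0, μ + ν, fun x ↦ mem_center_of_two_nsmul_mem h2 ?_⟩
  rw [properPart_add, sub_add_eq_sub_sub q, two_nsmul]
  exact hcentral x x

end IsCommuting

end Matrix

end CommutingTrace

open CommutingTrace in
theorem stmt9_general {ι R : Type*} [Fintype ι] [DecidableEq ι] [CommRing R]
    (h2 : IsSMulRegular R (2 : ℕ))
    (q : Matrix ι ι R →ₗ[R] Matrix ι ι R →ₗ[R] Matrix ι ι R)
    (hcomm : ∀ x : Matrix ι ι R, q x x * x = x * q x x) :
    ∃ z ∈ Subring.center (Matrix ι ι R),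
      ∃ μ : Matrix ι ι R →ₗ[R] Matrix ι ι R,
        (∀ x, μ x ∈ Subring.center (Matrix ι ι R)) ∧
        ∃ p : Matrix ι ι R →ₗ[R] Matrix ι ι R →ₗ[R] Matrix ι ι R,
          (∀ x y, p x y ∈ Subring.center (Matrix ι ι R)) ∧
          ∀ x : Matrix ι ι R, q x x = z * x ^ 2 + μ x * x + p x x := by
  obtain ⟨z, μ, hcentral⟩ := IsCommuting.exists_sub_properPart_mem_center h2 hcomm
  obtain ⟨c, hc, hc_eq⟩ := exists_linearMap_mem_center (ι := ι) (R := R)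
  have hscalar (r : R) : algebraMap R (Matrix ι ι R) r ∈ Subring.center (Matrix ι ι R) :=
    Subring.mem_center_iff.2 fun x ↦ (Algebra.commutes r x).symm
  refine ⟨algebraMap R _ z, hscalar z, Algebra.linearMap R _ ∘ₗ μ, fun x ↦ hscalar (μ x),
    (q - properPart z μ).compr₂ c, fun x y ↦ hc _, fun x ↦ ?_⟩
  rw [LinearMap.compr₂_apply, hc_eq _ (hcentral x)]
  simp [properPart_apply, pow_two, Algebra.smul_def]

/-- **Corollary 3.18.**  Let `R` be a `2`-torsionfree commutative domain and
`M_n(R)` the full algebra of `n × n` matrices over `R`.  Then for every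
`R`-bilinear map `q : M_n(R) × M_n(R) → M_n(R)`, every commuting trace `T_q`
of `q` is proper. -/
theorem stmt9 (n : ℕ) (R : Type*) [CommRing R] [IsDomain R]
    (htf : ∀ r : R, r + r = 0 → r = 0)
    (q : Matrix (Fin n) (Fin n) R →ₗ[R] Matrix (Fin n) (Fin n) R →ₗ[R]
          Matrix (Fin n) (Fin n) R)
    (hcomm : ∀ x : Matrix (Fin n) (Fin n) R, q x x * x = x * q x x) :
    ∃ z ∈ Subring.center (Matrix (Fin n) (Fin n) R),
      ∃ μ : Matrix (Fin n) (Fin n) R →ₗ[R] Matrix (Fin n) (Fin n) R,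
        (∀ x, μ x ∈ Subring.center (Matrix (Fin n) (Fin n) R)) ∧
        ∃ p : Matrix (Fin n) (Fin n) R →ₗ[R] Matrix (Fin n) (Fin n) R →ₗ[R]
              Matrix (Fin n) (Fin n) R,
          (∀ x y, p x y ∈ Subring.center (Matrix (Fin n) (Fin n) R)) ∧
          ∀ x : Matrix (Fin n) (Fin n) R, q x x = z * x ^ 2 + μ x * x + p x x :=
  stmt9_general (IsSMulRegular.of_right_eq_zero_of_smul fun r hr ↦
    htf r (by rwa [← two_nsmul])) q hcomm
end
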